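/- arXiv:2006.01330 — 4 statements merged into one kernel-verified Lean document; each statement's English description precedes it below -/
import Mathlib

section
/- Let (A, m) be a one-dimensional Noetherian local ring. Then A is a weakly Arf ring if and only if the m-adic completion Â of A is a weakly Arf ring. -/
open scoped TensorProduct

/-- `A` is a *weakly Arf ring*: whenever `x, y, z ∈ A` with `x` a non-zerodivisor on `A`
and the fractions `y/x` and `z/x` in the total ring of fractions `Q(A)` are integral
over `A`, then `y * z ∈ x A`. -/
def IsWeaklyArfRing (A : Type*) [CommRing A] : Prop :=
  ∀ (x y z : A) (hx : x ∈ nonZeroDivisors A),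
    IsIntegral A (IsLocalization.mk' (FractionRing A) y
      (⟨x, hx⟩ : nonZeroDivisors A)) →
    IsIntegral A (IsLocalization.mk' (FractionRing A) z
      (⟨x, hx⟩ : nonZeroDivisors A)) →
    y * z ∈ Ideal.span {x}

open scoped nonZeroDivisors

lemma wa_integral_iff {A : Type*} [CommRing A] (x y : A) (hx : x ∈ nonZeroDivisors A) :
    IsIntegral A (IsLocalization.mk' (FractionRing A) y (⟨x, hx⟩ : nonZeroDivisors A)) ↔
    ∃ (n : ℕ) (c : ℕ → A), y ^ n = ∑ i ∈ Finset.range n, c i * (x ^ (n - i) * y ^ i) := by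
  set t := IsLocalization.mk' (FractionRing A) y (⟨x, hx⟩ : nonZeroDivisors A) with ht
  have hxt : algebraMap A (FractionRing A) x * t = algebraMap A (FractionRing A) y :=
    IsLocalization.mk'_spec' (FractionRing A) y (⟨x, hx⟩ : nonZeroDivisors A)
  have hu : IsUnit (algebraMap A (FractionRing A) x) :=
    IsLocalization.map_units (FractionRing A) (⟨x, hx⟩ : nonZeroDivisors A)
  have hinj : Function.Injective (algebraMap A (FractionRing A)) :=
    IsLocalization.injective (FractionRing A) le_rfl
  have key : ∀ (n : ℕ) (c : ℕ → A), algebraMap A (FractionRing A)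
      (∑ i ∈ Finset.range n, c i * (x ^ (n - i) * y ^ i)) =
      algebraMap A (FractionRing A) x ^ n *
        ∑ i ∈ Finset.range n, algebraMap A (FractionRing A) (c i) * t ^ i := by
    intro n c
    rw [map_sum, Finset.mul_sum]
    refine Finset.sum_congr rfl fun i hi => ?_
    have hi' : i ≤ n := (Finset.mem_range.mp hi).le
    simp only [map_mul, map_pow, ← hxt, mul_pow]
    rw [← Nat.sub_add_cancel hi', pow_add]
    simp only [Nat.add_sub_cancel]
    ring
  constructor
  · rintro ⟨p, hp, hpt⟩
    refine ⟨p.natDegree, fun i => - p.coeff i, hinj ?_⟩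
    rw [key, map_pow, ← hxt, mul_pow]
    congr 1
    rw [Polynomial.eval₂_eq_sum_range, Finset.sum_range_succ, hp.coeff_natDegree, map_one,
      one_mul] at hpt
    simp only [map_neg, neg_mul, Finset.sum_neg_distrib]
    linear_combination hpt
  · rintro ⟨n, c, h⟩
    refine ⟨Polynomial.X ^ n + (- ∑ i ∈ Finset.range n, Polynomial.C (c i) * Polynomial.X ^ i),
      Polynomial.monic_X_pow_add ?_, ?_⟩
    · rw [Polynomial.degree_neg]
      refine (Polynomial.degree_sum_le _ _).trans_lt ?_
      rw [Finset.sup_lt_iff (by exact WithBot.bot_lt_coe n)]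
      intro i hi
      exact (Polynomial.degree_C_mul_X_pow_le _ _).trans_lt
        (by exact_mod_cast Finset.mem_range.mp hi)
    · have h2 := congrArg (algebraMap A (FractionRing A)) h
      rw [key, map_pow, ← hxt, mul_pow] at h2
      have h3 := (hu.pow n).mul_left_cancel h2
      simp only [Polynomial.eval₂_add, Polynomial.eval₂_neg, Polynomial.eval₂_finsetSum,
        Polynomial.eval₂_mul, Polynomial.eval₂_C, Polynomial.eval₂_pow, Polynomial.eval₂_X]
      rw [h3]; ring

lemma wa_integral_iff_span {A : Type*} [CommRing A] (x y : A) (hx : x ∈ nonZeroDivisors A) :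
    IsIntegral A (IsLocalization.mk' (FractionRing A) y (⟨x, hx⟩ : nonZeroDivisors A)) ↔
    ∃ (n : ℕ), y ^ n ∈ Ideal.span
      ((fun i => x ^ (n - i) * y ^ i) '' (Finset.range n : Set ℕ)) := by
  rw [wa_integral_iff]
  refine exists_congr fun n => ?_
  constructor
  · rintro ⟨c, h⟩
    rw [h]
    exact Ideal.sum_mem _ fun i hi => Ideal.mul_mem_left _ _ (Ideal.subset_span
      (Set.mem_image_of_mem _ (Finset.mem_coe.mpr hi)))
  · intro h
    obtain ⟨c, hc⟩ := (Submodule.mem_span_image_finset_iff_exists_fun A).mp h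
    refine ⟨fun i => if h : i ∈ Finset.range n then c ⟨i, h⟩ else 0, ?_⟩
    rw [← hc, ← Finset.sum_coe_sort (Finset.range n)]
    refine Finset.sum_congr rfl fun i _ => ?_
    beta_reduce
    rw [dif_pos i.2, smul_eq_mul]

lemma wa_precomplete_pi {B : Type*} [CommRing B] (I : Ideal B) [IsPrecomplete I B] (k : ℕ) :
    IsPrecomplete I (Fin k → B) := by
  have h1 : ∀ (n : ℕ) (v : Fin k → B), v ∈ (I ^ n • ⊤ : Submodule B (Fin k → B)) ↔
      ∀ i, v i ∈ I ^ n := by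
    intro n v
    constructor
    · intro hv i
      have := Submodule.mem_map_of_mem (f := LinearMap.proj (R := B) (φ := fun _ : Fin k => B) i) hv
      rw [Submodule.map_smul''] at this
      have h2 := Submodule.smul_mono (le_refl (I ^ n)) (le_top (a := Submodule.map
        (LinearMap.proj (R := B) (φ := fun _ : Fin k => B) i) ⊤)) this
      simpa using h2
    · intro hv
      rw [pi_eq_sum_univ v]
      exact Submodule.sum_mem _ fun i _ => Submodule.smul_mem_smul (hv i) trivial
  refine ⟨fun f hf => ?_⟩
  have h2 : ∀ i, ∃ L : B, ∀ n, f n i ≡ L [SMOD (I ^ n • ⊤ : Submodule B B)] := by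
    intro i
    refine IsPrecomplete.prec' (I := I) (fun n => f n i) fun {m n} hmn => ?_
    have := hf hmn
    rw [SModEq.sub_mem, h1] at this
    rw [SModEq.sub_mem]
    simpa using this i
  choose L hL using h2
  refine ⟨L, fun n => ?_⟩
  rw [SModEq.sub_mem, h1]
  intro i
  have := hL i n
  rw [SModEq.sub_mem] at this
  simpa using this

/-- complete Nakayama for ideals -/
lemma wa_fg_of_complete {B : Type*} [CommRing B] (I : Ideal B) [IsAdicComplete I B]
    (P Q : Ideal B) (hQ : Q.FG) (hQP : Q ≤ P) (h : P ≤ Q ⊔ I * P) : P.FG := by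
  obtain ⟨k, s, hs⟩ := Submodule.fg_iff_exists_fin_generating_family.mp hQ
  have hsP : ∀ i, s i ∈ P := fun i => hQP (hs ▸ Submodule.subset_span ⟨i, rfl⟩)
  let f : (Fin k → B) →ₗ[B] P := Fintype.linearCombination B (fun i => (⟨s i, hsP i⟩ : P))
  have : IsPrecomplete I (Fin k → B) := wa_precomplete_pi I k
  have : IsHausdorff I P := by
    refine ⟨fun x hx => ?_⟩
    apply Subtype.ext
    refine IsHausdorff.haus' (I := I) (x : B) fun n => ?_
    have := hx n
    rw [SModEq.zero] at this ⊢
    have h3 := Submodule.mem_map_of_mem (f := P.subtype) this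
    rw [Submodule.map_smul''] at h3
    exact Submodule.smul_mono (le_refl (I ^ n)) le_top h3
  have hsurj : Function.Surjective f := by
    apply surjective_of_mkQ_comp_surjective (I := I)
    intro y
    obtain ⟨p, rfl⟩ := Submodule.mkQ_surjective _ y
    obtain ⟨q, hq, r, hr, hqr⟩ := Submodule.mem_sup.mp (h p.2)
    rw [← hs, ← Fintype.range_linearCombination] at hq
    obtain ⟨c, hc⟩ := hq
    refine ⟨c, ?_⟩
    rw [LinearMap.comp_apply, ← sub_eq_zero, ← map_sub, Submodule.mkQ_apply,
      Submodule.Quotient.mk_eq_zero]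
    have hm : Submodule.map P.subtype (I • ⊤ : Submodule B P) = I * P := by
      rw [Submodule.map_smul'', Submodule.map_top, Submodule.range_subtype]; rfl
    have hfc : ((f c : P) : B) = q := by
      rw [← hc]; simp [f, Fintype.linearCombination_apply]
    have h4 : P.subtype (f c - p) ∈ Submodule.map P.subtype (I • ⊤ : Submodule B P) := by
      rw [hm]
      have : P.subtype (f c - p) = - r := by
        simp only [map_sub, Submodule.subtype_apply, hfc]; rw [← hqr]; ring
      rw [this]; exact neg_mem hr
    obtain ⟨w, hw, hw'⟩ := h4
    rwa [← P.injective_subtype hw']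
  have hfin : Module.Finite B P := Module.Finite.of_surjective f hsurj
  exact (Submodule.fg_top _).mp hfin.fg_top

lemma wa_noeth {A B : Type*} [CommRing A] [IsNoetherianRing A] [CommRing B] [Algebra A B]
    (I : Ideal B) [IsAdicComplete I B] (a : B) (ha : a ∈ I)
    (happ : ∀ b : B, ∃ r : A, b - algebraMap A B r ∈ Ideal.span {a}) :
    IsNoetherianRing B := by
  have hq : IsNoetherianRing (B ⧸ Ideal.span {a}) := by
    apply isNoetherianRing_of_surjective A _ ((Ideal.Quotient.mk (Ideal.span {a})).comp (algebraMap A B))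
    intro y
    obtain ⟨b, rfl⟩ := Ideal.Quotient.mk_surjective y
    obtain ⟨r, hr⟩ := happ b
    exact ⟨r, (Ideal.Quotient.eq.mpr hr).symm⟩
  have hgen : ∀ P : Ideal B, ∃ Q : Ideal B, Q.FG ∧ Q ≤ P ∧ P ≤ Q ⊔ Ideal.span {a} := by
    intro P
    classical
    obtain ⟨Q, hQ1, hQ2, hQ3⟩ : ∃ Q : Ideal B, Q.FG ∧ Q ≤ P ∧ 
        Q.map (Ideal.Quotient.mk (Ideal.span {a})) = P.map (Ideal.Quotient.mk (Ideal.span {a})) := by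
      have hfg : (P.map (Ideal.Quotient.mk (Ideal.span {a}))).FG := IsNoetherian.noetherian _
      obtain ⟨t, ht, ht2⟩ := Submodule.fg_span_iff_fg_span_finset_subset
        ((Ideal.Quotient.mk (Ideal.span {a})) '' (P : Set B)) |>.mp hfg
      obtain ⟨u, hu, hu2⟩ := Finset.subset_set_image_iff.mp ht
      refine ⟨Ideal.span (u : Set B), ⟨u, rfl⟩, Ideal.span_le.mpr hu, ?_⟩
      rw [Ideal.map_span, ← Finset.coe_image]
      refine Eq.trans ?_ ht2.symm
      rw [← hu2]
    refine ⟨Q, hQ1, hQ2, ?_⟩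
    have := Ideal.le_comap_map (f := Ideal.Quotient.mk (Ideal.span {a})) (I := P)
    rw [← hQ3, Ideal.comap_map_of_surjective' _ Ideal.Quotient.mk_surjective, Ideal.mk_ker] at this
    exact this
  refine IsNoetherianRing.of_prime fun P hP => ?_
  obtain ⟨Q, hQ, hQP, hPQ⟩ := hgen P
  by_cases haP : a ∈ P
  · have : P = Q ⊔ Ideal.span {a} := le_antisymm hPQ
      (sup_le hQP ((Ideal.span_singleton_le_iff_mem _).mpr haP))
    rw [this]
    exact Submodule.FG.sup hQ ⟨{a}, by simp⟩
  · refine wa_fg_of_complete I P Q hQ hQP fun p hp => ?_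
    obtain ⟨q, hq, r, hr, hqr⟩ := Submodule.mem_sup.mp (hPQ hp)
    obtain ⟨b, rfl⟩ := Ideal.mem_span_singleton'.mp hr
    have hb : b * a ∈ P := by
      have : b * a = p - q := by rw [← hqr]; ring
      rw [this]; exact P.sub_mem hp (hQP hq)
    have hb' : b ∈ P := (hP.mem_or_mem hb).resolve_right haP
    rw [← hqr, mul_comm b a]
    exact Submodule.add_mem_sup hq (Ideal.mul_mem_mul ha hb')

/-- In a Noetherian local ring whose maximal ideal is the radical of a principal ideal,
non-zerodivisors generate ideals containing a power of the maximal ideal. -/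
lemma wa_pow_le {B : Type*} [CommRing B] [IsNoetherianRing B] [IsLocalRing B]
    (a : B) (k : ℕ) (ha : a ∈ IsLocalRing.maximalIdeal B)
    (hk : IsLocalRing.maximalIdeal B ^ k ≤ Ideal.span {a})
    (x : B) (hx : x ∈ nonZeroDivisors B) :
    ∃ n, IsLocalRing.maximalIdeal B ^ n ≤ Ideal.span {x} := by
  have hmin : IsLocalRing.maximalIdeal B ∈ (Ideal.span {a}).minimalPrimes := by
    refine ⟨⟨inferInstance, (Ideal.span_singleton_le_iff_mem _).mpr ha⟩, ?_⟩
    rintro q ⟨hq, hq2⟩ -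
    exact hq.le_of_pow_le (hk.trans hq2)
  have hht : (IsLocalRing.maximalIdeal B).height ≤ 1 :=
    Ideal.height_le_one_of_isPrincipal_of_mem_minimalPrimes _ _ hmin
  apply Ideal.exists_pow_le_of_le_radical_of_fg _ (IsNoetherian.noetherian _)
  rw [Ideal.radical_eq_sInf]
  refine le_sInf ?_
  rintro q ⟨hq, hqp⟩
  have h1 : 1 ≤ q.height :=
    (Ideal.one_le_height_span_singleton_of_mem_nonZeroDivisors hx).trans (Ideal.height_mono hq)
  exact (Ideal.eq_of_le_of_height_le _ (IsLocalRing.le_maximalIdeal hqp.ne_top)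
    (hht.trans h1)).ge

lemma wa_main {A B : Type*} [CommRing A] [IsNoetherianRing A] [IsLocalRing A]
    [CommRing B] [IsLocalRing B] [Algebra A B] [Module.FaithfullyFlat A B]
    [IsAdicComplete (IsLocalRing.maximalIdeal B) B]
    (hm : IsLocalRing.maximalIdeal B = (IsLocalRing.maximalIdeal A).map (algebraMap A B))
    (happ : ∀ (n : ℕ) (b : B), ∃ r : A, b - algebraMap A B r ∈ IsLocalRing.maximalIdeal B ^ n)
    (hdim : ringKrullDim A = 1) : IsWeaklyArfRing A ↔ IsWeaklyArfRing B := by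
  classical
  have hnzd : ∀ x : A, x ∈ nonZeroDivisors A ↔ algebraMap A B x ∈ nonZeroDivisors B := by
    intro x
    constructor
    · intro hx
      have := Module.Flat.isSMulRegular_of_nonZeroDivisors (M := B) hx
      rw [mem_nonZeroDivisors_iff_right]
      intro z hz
      apply this
      simpa [Algebra.smul_def, mul_comm] using hz
    · intro hx
      rw [mem_nonZeroDivisors_iff_right] at hx ⊢
      intro z hz
      apply FaithfulSMul.algebraMap_injective A B
      rw [map_zero]
      exact hx _ (by rw [← map_mul, hz, map_zero])
  have hmem : ∀ (J : Ideal A) (y : A), algebraMap A B y ∈ J.map (algebraMap A B) ↔ y ∈ J := by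
    intro J y
    rw [← Ideal.mem_comap, Ideal.comap_map_eq_self_of_faithfullyFlat]
  have hint : ∀ (x y : A) (hx : x ∈ nonZeroDivisors A),
      IsIntegral A (IsLocalization.mk' (FractionRing A) y (⟨x, hx⟩ : nonZeroDivisors A)) ↔
      IsIntegral B (IsLocalization.mk' (FractionRing B) (algebraMap A B y)
        (⟨algebraMap A B x, (hnzd x).mp hx⟩ : nonZeroDivisors B)) := by
    intro x y hx
    rw [wa_integral_iff_span, wa_integral_iff_span]
    refine exists_congr fun n => ?_
    rw [← hmem, Ideal.map_span, map_pow, Set.image_image]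
    simp only [map_mul, map_pow]
  constructor
  · intro hA
    obtain ⟨a, ham, k, hk⟩ : ∃ a ∈ IsLocalRing.maximalIdeal A, ∃ k,
        IsLocalRing.maximalIdeal A ^ k ≤ Ideal.span {a} := by
      obtain ⟨s, hs, hc⟩ := Ideal.exists_finset_card_eq_height_of_isNoetherianRing
        (IsLocalRing.maximalIdeal A)
      have h1 : (IsLocalRing.maximalIdeal A).height = 1 := by
        have := IsLocalRing.maximalIdeal_height_eq_ringKrullDim (R := A)
        rw [hdim] at this
        exact_mod_cast this
      rw [h1] at hc
      obtain ⟨a, rfl⟩ := Finset.card_eq_one.mp (by exact_mod_cast hc)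
      rw [Finset.coe_singleton] at hs
      refine ⟨a, hs.1.2 (Ideal.mem_span_singleton_self a), ?_⟩
      apply Ideal.exists_pow_le_of_le_radical_of_fg _ (IsNoetherian.noetherian _)
      rw [Ideal.radical_eq_sInf]
      refine le_sInf ?_
      rintro q ⟨hq, hqp⟩
      exact hs.2 ⟨hqp, hq⟩ (IsLocalRing.le_maximalIdeal hqp.ne_top)
    have haB : algebraMap A B a ∈ IsLocalRing.maximalIdeal B := hm ▸ Ideal.mem_map_of_mem _ ham
    have hkB : IsLocalRing.maximalIdeal B ^ k ≤ Ideal.span {algebraMap A B a} := by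
      have := Ideal.map_mono (f := algebraMap A B) hk
      rwa [Ideal.map_pow, ← hm, Ideal.map_span, Set.image_singleton] at this
    have : IsNoetherianRing B := wa_noeth (A := A) (IsLocalRing.maximalIdeal B) _ haB
      fun b => (happ k b).imp fun r hr => hkB hr
    intro x y z hx hy hz
    obtain ⟨n, hn⟩ := wa_pow_le _ k haB hkB x hx
    obtain ⟨r, hr⟩ := happ (n + 1) x
    obtain ⟨u, hu⟩ : ∃ u : B, IsUnit u ∧ algebraMap A B r = x * u := by
      rw [pow_succ'] at hr
      have h2 := Ideal.mul_mono_right hn hr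
      obtain ⟨w, hw, hw2⟩ := Ideal.mem_mul_span_singleton.mp h2
      refine ⟨1 - w, ?_, by linear_combination hw2⟩
      by_contra hcon
      have : (1 : B) ∈ IsLocalRing.maximalIdeal B := by
        have := add_mem ((IsLocalRing.mem_maximalIdeal _).mpr hcon) hw
        rwa [sub_add_cancel] at this
      exact (Ideal.ne_top_iff_one _).mp Ideal.IsPrime.ne_top' this
    obtain ⟨hu, hru⟩ := hu
    have hxr : x ∣ algebraMap A B r := ⟨u, hru⟩
    obtain ⟨v, hv⟩ := hu.exists_right_inv
    have hrx : x = algebraMap A B r * v := by rw [hru, mul_assoc, hv, mul_one]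
    have hrB : algebraMap A B r ∈ nonZeroDivisors B := by
      rw [hru]; exact mul_mem hx hu.mem_nonZeroDivisors
    have hrA := (hnzd r).mpr hrB
    -- approximate an element integral after dividing
    have happr : ∀ y : B, IsIntegral B (IsLocalization.mk' (FractionRing B) y
        (⟨x, hx⟩ : nonZeroDivisors B)) → ∃ (b : A) (w : B), y = algebraMap A B b + x * w ∧
        IsIntegral A (IsLocalization.mk' (FractionRing A) b
          (⟨r, hrA⟩ : nonZeroDivisors A)) := by
      intro y hy
      obtain ⟨b, hb⟩ := happ n y
      obtain ⟨w, hw⟩ := Ideal.mem_span_singleton'.mp (hn hb)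
      refine ⟨b, w, by linear_combination -hw, ?_⟩
      rw [hint]
      have : IsLocalization.mk' (FractionRing B) (algebraMap A B b)
          (⟨algebraMap A B r, (hnzd r).mp hrA⟩ : nonZeroDivisors B) =
          algebraMap B (FractionRing B) v * (IsLocalization.mk' (FractionRing B) y
            (⟨x, hx⟩ : nonZeroDivisors B) - algebraMap B (FractionRing B) w) := by
        rw [IsLocalization.mk'_eq_iff_eq_mul]
        have hs := IsLocalization.mk'_spec' (FractionRing B) y (⟨x, hx⟩ : nonZeroDivisors B)
        have e1 := congrArg (algebraMap B (FractionRing B)) hrx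
        have e2 := congrArg (algebraMap B (FractionRing B)) hw
        simp only [map_mul, map_sub] at e1 e2 hs ⊢
        linear_combination (-1 : FractionRing B) * hs + e2 + (IsLocalization.mk' (FractionRing B) y
            (⟨x, hx⟩ : nonZeroDivisors B) - algebraMap B (FractionRing B) w) * e1
      rw [this]
      exact isIntegral_algebraMap.mul (hy.sub isIntegral_algebraMap)
    obtain ⟨b, w, rfl, hb⟩ := happr y hy
    obtain ⟨c, w', rfl, hc⟩ := happr z hz
    have := (hmem _ _).mpr (hA r b c hrA hb hc)
    rw [Ideal.map_span, Set.image_singleton, Ideal.mem_span_singleton, map_mul] at this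
    rw [Ideal.mem_span_singleton]
    obtain ⟨d, hd⟩ := hxr.trans this
    exact ⟨d + algebraMap A B b * w' + w * (algebraMap A B c + x * w'), by
      linear_combination hd⟩
  · intro hB x y z hx hy hz
    have := hB _ _ _ ((hnzd x).mp hx) ((hint x y hx).mp hy) ((hint x z hx).mp hz)
    rw [← hmem, Ideal.map_span, Set.image_singleton, map_mul]
    exact this

/-- A one-dimensional Noetherian local ring `A` is weakly Arf iff its `m`-adic
completion `Â` is weakly Arf. -/
theorem weaklyArf_iff_completion (A : Type*) [CommRing A] [IsNoetherianRing A]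
    [IsLocalRing A] (hdim : ringKrullDim A = 1) :
    IsWeaklyArfRing A ↔
      IsWeaklyArfRing (AdicCompletion (IsLocalRing.maximalIdeal A) A) := by
  have : Module.FaithfullyFlat A (AdicCompletion (IsLocalRing.maximalIdeal A) A) :=
    Module.FaithfullyFlat.of_flat_of_isLocalHom
  refine wa_main AdicCompletion.maximalIdeal_eq_map ?_ hdim
  intro n b
  obtain ⟨r, hr⟩ := Submodule.Quotient.mk_surjective _ (b.1 n)
  refine ⟨r, ?_⟩
  rw [AdicCompletion.maximalIdeal_eq_map, ← Ideal.map_pow, ← Submodule.restrictScalars_mem A,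
    ← Ideal.smul_top_eq_map, AdicCompletion.algebraMap_apply,
    AdicCompletion.pow_smul_top_eq_ker_eval (IsNoetherian.noetherian _)]
  simpa [AdicCompletion.eval, sub_eq_zero] using hr.symm
end

section
/- Let A be a Noetherian ring satisfying Serre's condition (S₁) and let S be a multiplicatively closed subset of A. Then (S⁻¹A)* = S⁻¹(A*) inside Q(S⁻¹A), where Q(S⁻¹A) is identified with S⁻¹Q(A) and the integral closure of S⁻¹A in Q(S⁻¹A) with S⁻¹Ā. -/
open scoped TensorProduct

set_option synthInstance.maxHeartbeats 1000000 in
set_option maxHeartbeats 2000000 in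
/-- The strict closure `A*` of `A` in the integral closure `Ā` of `A` in its total ring
of fractions `Q(A)`: the set of `x ∈ Ā` such that `x ⊗ 1 = 1 ⊗ x` in `Ā ⊗_A Ā`. -/
def strictClosureSet (A : Type*) [CommRing A] : Set (FractionRing A) :=
  {x | ∃ hx : x ∈ integralClosure A (FractionRing A),
    ((⟨x, hx⟩ : integralClosure A (FractionRing A)) ⊗ₜ[A]
        (1 : integralClosure A (FractionRing A)) :
      TensorProduct A (integralClosure A (FractionRing A))
        (integralClosure A (FractionRing A))) =
    (1 : integralClosure A (FractionRing A)) ⊗ₜ[A]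
        (⟨x, hx⟩ : integralClosure A (FractionRing A))}

/-- `A` is strictly closed in `Ā`, i.e. `A = A*`. -/
def IsStrictlyClosed (A : Type*) [CommRing A] : Prop :=
  ∀ x ∈ strictClosureSet A, ∃ a : A, algebraMap A (FractionRing A) a = x

/-- `xs` is a regular sequence on `R`: for each `i`, the element `xs i` acts injectively
on `R / (xs 0, …, xs (i-1))`. -/
def IsRegularSeq (R : Type*) [CommRing R] (xs : List R) : Prop :=
  ∀ (i : ℕ) (h : i < xs.length),
    IsSMulRegular (R ⧸ Ideal.span {y : R | y ∈ xs.take i}) (xs.get ⟨i, h⟩)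

/-- For a Noetherian local ring `R`, `depth R ≥ n` holds iff there is a regular sequence
of length `n` consisting of elements of the maximal ideal. -/
def RingDepthGE (R : Type*) [CommRing R] [IsLocalRing R] (n : ℕ) : Prop :=
  ∃ xs : List R, xs.length = n ∧ (∀ x ∈ xs, x ∈ IsLocalRing.maximalIdeal R) ∧
    IsRegularSeq R xs

/-- Serre's condition `(S_n)`: `depth A_P ≥ min (n, dim A_P)` for every prime ideal `P`
of `A`. -/
def SerreSCondition (A : Type*) [CommRing A] (n : ℕ) : Prop :=
  ∀ (P : Ideal A) [P.IsPrime], ∀ k : ℕ, k ≤ n →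
    (k : WithBot (WithTop ℕ)) ≤ ringKrullDim (Localization.AtPrime P) →
    RingDepthGE (Localization.AtPrime P) k


lemma aux_assoc_min (A : Type*) [CommRing A] 
    (hS1 : SerreSCondition A 1) (P : Ideal A) (hP : P ∈ associatedPrimes A A) [IsNoetherianRing A] :
    P ∈ minimalPrimes A := by
  rw [AssociatedPrimes.mem_iff, isAssociatedPrime_iff] at hP
  obtain ⟨hp, x, hx⟩ := hP
  rw [← Ideal.height_eq_zero_iff]
  by_contra h0
  have h1 : (1 : ℕ∞) ≤ P.height := Order.one_le_iff_ne_zero.mpr h0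
  obtain ⟨xs, hl, hm, hr⟩ := hS1 P 1 le_rfl (by
    rw [IsLocalization.AtPrime.ringKrullDim_eq_height P]
    exact WithBot.coe_le_coe.mpr h1)
  obtain ⟨y, rfl⟩ := List.length_eq_one_iff.mp hl
  have hy := hm y (by simp)
  have hreg := hr 0 (by simp)
  have hbot : Ideal.span {z : Localization.AtPrime P | z ∈ [y].take 0} = ⊥ := by
    rw [Ideal.span_eq_bot]
    intro z hz
    simp at hz
  rw [hbot] at hreg
  simp only [List.get_eq_getElem, List.getElem_cons_zero] at hreg
  obtain ⟨⟨p, u⟩, hpu⟩ := IsLocalization.surj P.primeCompl y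
  have hpP : p ∈ P := by
    rw [← IsLocalization.AtPrime.to_map_mem_maximal_iff (Localization.AtPrime P) P]
    rw [← hpu]
    exact Ideal.mul_mem_right _ _ hy
  have hpx : p * x = 0 := by
    rw [hx] at hpP
    simpa [Submodule.mem_colon_singleton] using hpP
  have hyx : y * algebraMap A (Localization.AtPrime P) x = 0 := by
    have : (y * algebraMap A (Localization.AtPrime P) x) * algebraMap A _ (u : A) = 0 := by
      rw [mul_right_comm, hpu, ← map_mul, hpx, map_zero]
    exact ((IsLocalization.map_units (Localization.AtPrime P) u).mul_left_eq_zero).mp this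
  have hx0 : algebraMap A (Localization.AtPrime P) x = 0 := by
    have h2 : Ideal.Quotient.mk (⊥ : Ideal (Localization.AtPrime P)) (algebraMap A _ x) = 0 := by
      apply hreg
      simp only [smul_zero]
      rw [← Ideal.Quotient.mk_eq_mk, ← Submodule.Quotient.mk_smul, smul_eq_mul, hyx]
      simp
    rwa [Ideal.Quotient.eq_zero_iff_mem, Ideal.mem_bot] at h2
  obtain ⟨v, hv⟩ := (IsLocalization.map_eq_zero_iff P.primeCompl _ x).mp hx0
  apply v.2
  change (v : A) ∈ P
  have hv2 : (v : A) ∈ (⊥ : Submodule A A).colon {x} := by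
    simpa [Submodule.mem_colon_singleton] using hv
  exact hx.symm ▸ hv2

lemma aux_artinian (A : Type*) [CommRing A] [IsNoetherianRing A]
    (hS1 : SerreSCondition A 1) : IsArtinianRing (FractionRing A) := by
  have hn : IsNoetherianRing (FractionRing A) :=
    IsLocalization.isNoetherianRing (nonZeroDivisors A) _ inferInstance
  rw [isArtinianRing_iff_krullDimLE_zero]
  refine Ring.KrullDimLE.mk₀ fun Q hQ => ?_
  obtain ⟨M, hM, hQM⟩ := Q.exists_le_maximal hQ.ne_top
  have hMp := hM.isPrime
  have hd := (IsLocalization.disjoint_under_iff (nonZeroDivisors A) (FractionRing A) M).mpr hMp.ne_top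
  obtain ⟨P, h, hP⟩ : ∃ P ∈ associatedPrimes A A, M.comap (algebraMap A (FractionRing A)) ≤ P :=
    ((M.comap (algebraMap A (FractionRing A))).subset_union_prime_finite (associatedPrimes.finite ..) (f := id) 0 0 fun _ h _ _ ↦ h.1).1 <|
    biUnion_associatedPrimes_eq_compl_nonZeroDivisors A ▸ hd.symm.subset_compl_right
  have hmin := aux_assoc_min A hS1 P h
  have hle : Q.comap (algebraMap A (FractionRing A)) ≤ P := (Ideal.comap_mono hQM).trans hP
  have h3 : P ≤ Q.comap (algebraMap A (FractionRing A)) :=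
    hmin.2 ⟨Ideal.comap_isPrime _ _, bot_le⟩ hle
  have h4 : M ≤ Q := by
    rw [← IsLocalization.map_under (nonZeroDivisors A) (FractionRing A) M, Ideal.map_le_iff_le_comap]
    exact hP.trans h3
  rwa [le_antisymm hQM h4]

lemma aux_key (A : Type*) [CommRing A] [IsNoetherianRing A]
    (hS1 : SerreSCondition A 1) (S : Submonoid A) (b : A)
    (hb : algebraMap A (Localization S) b ∈ nonZeroDivisors (Localization S)) :
    ∃ (c t s : A), t ∈ nonZeroDivisors A ∧ s ∈ S ∧ b * c = t * s := by
  have := aux_artinian A hS1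
  obtain ⟨n, y, hy⟩ := IsArtinian.exists_pow_succ_smul_dvd
    (algebraMap A (FractionRing A) b) (1 : FractionRing A)
  obtain ⟨⟨c, t⟩, hc⟩ := IsLocalization.surj (nonZeroDivisors A) y
  have h1 : b ^ n * (b * c) = b ^ n * t := by
    apply IsFractionRing.injective A (FractionRing A)
    simp only [map_mul, map_pow, smul_eq_mul, Nat.succ_eq_add_one, pow_succ] at *
    rw [← hc]
    linear_combination algebraMap A (FractionRing A) t * hy
  have h2 : algebraMap A (Localization S) (b * c) = algebraMap A (Localization S) t := by
    have h3 := congrArg (algebraMap A (Localization S)) h1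
    rw [map_mul, map_mul _ _ (t : A), map_pow] at h3
    exact (mul_cancel_left_mem_nonZeroDivisors (pow_mem hb n)).mp h3
  obtain ⟨s, hs⟩ := (IsLocalization.eq_iff_exists S (Localization S)).mp h2
  exact ⟨s * c, t, s, t.2, s.2, by linear_combination hs⟩

lemma aux_strict {A B K L : Type*} [CommRing A] [CommRing B] [CommRing K] [CommRing L]
    [Algebra A B] [Algebra A K] [Algebra B L] [Algebra A L] [Algebra K L]
    [IsScalarTower A B L] [IsScalarTower A K L] (S : Submonoid A) [IsLocalization S B]
    [IsLocalization (Algebra.algebraMapSubmonoid K S) L] (ξ : L) :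
    (∃ hx : ξ ∈ integralClosure B L,
      ((⟨ξ, hx⟩ : integralClosure B L) ⊗ₜ[B] (1 : integralClosure B L) :
        TensorProduct B (integralClosure B L) (integralClosure B L)) =
      (1 : integralClosure B L) ⊗ₜ[B] (⟨ξ, hx⟩ : integralClosure B L)) ↔
    ∃ x : K, ∃ s ∈ S, (∃ hx : x ∈ integralClosure A K,
      ((⟨x, hx⟩ : integralClosure A K) ⊗ₜ[A] (1 : integralClosure A K) :
        TensorProduct A (integralClosure A K) (integralClosure A K)) =
      (1 : integralClosure A K) ⊗ₜ[A] (⟨x, hx⟩ : integralClosure A K)) ∧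
      ξ * algebraMap A L s = algebraMap K L x := by
  let f0 : integralClosure A K →+* integralClosure B L :=
    ((algebraMap K L).comp (algebraMap (integralClosure A K) K)).codRestrict
      (integralClosure B L) (fun x => by
        have h : IsIntegral A (x : K) := x.2
        have h2 := h.map (IsScalarTower.toAlgHom A K L)
        exact h2.tower_top)
  letI : Algebra (integralClosure A K) (integralClosure B L) := f0.toAlgebra
  have t1 : IsScalarTower (integralClosure A K) (integralClosure B L) L :=
    IsScalarTower.of_algebraMap_eq (fun x => rfl)
  have t2 : IsScalarTower A (integralClosure A K) (integralClosure B L) :=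
    IsScalarTower.of_algebraMap_eq (fun x => by
      apply Subtype.ext
      change algebraMap A L x = algebraMap K L (algebraMap A K x)
      rw [← IsScalarTower.algebraMap_apply])
  have t3 : IsLocalization (Algebra.algebraMapSubmonoid (integralClosure A K) S)
      (integralClosure B L) := IsLocalization.integralClosure (S := K) (Sf := L) (Rf := B) S
  let f : integralClosure A K →ₗ[A] integralClosure B L :=
    (IsScalarTower.toAlgHom A (integralClosure A K) (integralClosure B L)).toLinearMap
  have t4 : IsLocalizedModule S f := isLocalizedModule_iff_isLocalization.mpr t3
  have hf1 : f 1 = 1 := map_one (algebraMap (integralClosure A K) (integralClosure B L))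
  have hfv : ∀ x, ((f x : integralClosure B L) : L) = algebraMap K L x := fun x => rfl
  have t5 : IsLocalizedModule S (TensorProduct.map f f) := inferInstance
  let e := IsLocalization.moduleTensorEquiv S B (integralClosure B L) (integralClosure B L)
  have he : ∀ x y : integralClosure B L, e (x ⊗ₜ[B] y) = x ⊗ₜ[A] y := fun x y => rfl
  constructor
  · rintro ⟨hx, h⟩
    have h1 := congrArg e h
    rw [he, he] at h1
    obtain ⟨⟨x, s⟩, hxs⟩ := IsLocalizedModule.surj S f ⟨ξ, hx⟩
    have h2 : TensorProduct.map f f (x ⊗ₜ[A] 1) = TensorProduct.map f f (1 ⊗ₜ[A] x) := by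
      rw [TensorProduct.map_tmul, TensorProduct.map_tmul, hf1]
      dsimp only at hxs
      rw [← hxs, Submonoid.smul_def, ← TensorProduct.smul_tmul', TensorProduct.tmul_smul, h1]
    obtain ⟨s', hs'⟩ := (IsLocalizedModule.eq_iff_exists S (TensorProduct.map f f)).mp h2
    rw [Submonoid.smul_def, Submonoid.smul_def, TensorProduct.smul_tmul',
      ← TensorProduct.tmul_smul] at hs'
    refine ⟨((s' : A) • x : integralClosure A K), s' * s, mul_mem s'.2 s.2, ⟨Subtype.property _, hs'⟩, ?_⟩
    have h3 := congrArg (fun z : integralClosure B L => (z : L)) hxs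
    dsimp only at h3
    rw [hfv] at h3
    rw [Subalgebra.coe_smul, Algebra.smul_def, map_mul, map_mul (algebraMap K L), ← h3,
      ← IsScalarTower.algebraMap_apply, Submonoid.smul_def]
    change _ = _ * ((s : A) • ξ)
    rw [Algebra.smul_def]
    ring
  · rintro ⟨x, s, hs, ⟨hx, h⟩, hξ⟩
    obtain ⟨u, hu⟩ := (IsLocalization.map_units B (⟨s, hs⟩ : S)).exists_left_inv
    have h1 : ξ = ((u • f ⟨x, hx⟩ : integralClosure B L) : L) := by
      rw [Subalgebra.coe_smul, hfv, ← hξ, Algebra.smul_def, IsScalarTower.algebraMap_apply A B L,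
        mul_left_comm, ← map_mul, hu, map_one, mul_one]
    subst h1
    refine ⟨Subtype.property _, ?_⟩
    have h2 := congrArg (TensorProduct.map f f) h
    rw [TensorProduct.map_tmul, TensorProduct.map_tmul, hf1, ← he, ← he] at h2
    have h3 := e.injective h2
    change (u • f ⟨x, hx⟩) ⊗ₜ[B] _ = _ ⊗ₜ[B] (u • f ⟨x, hx⟩)
    rw [← TensorProduct.smul_tmul', TensorProduct.tmul_smul, h3]

/-- For `A` Noetherian with `(S₁)` and `S` a multiplicatively closed subset,
`(S⁻¹A)* = S⁻¹(A*)` inside `Q(S⁻¹A)`: an element `ξ` of `Q(S⁻¹A)` lies in the strict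
closure of `S⁻¹A` iff `ξ = (a/t)/s` for some `s ∈ S` and a fraction `a/t ∈ A*`. -/
theorem strictClosure_localization (A : Type*) [CommRing A] [IsNoetherianRing A]
    (hS1 : SerreSCondition A 1) (S : Submonoid A) :
    ∀ ξ : FractionRing (Localization S),
      ξ ∈ strictClosureSet (Localization S) ↔
        ∃ (a t : A) (ht : t ∈ nonZeroDivisors A) (s : A), s ∈ S ∧
          IsLocalization.mk' (FractionRing A) a
            (⟨t, ht⟩ : nonZeroDivisors A) ∈ strictClosureSet A ∧
          ξ * algebraMap (Localization S) (FractionRing (Localization S))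
              (algebraMap A (Localization S) (t * s)) =
            algebraMap (Localization S) (FractionRing (Localization S))
              (algebraMap A (Localization S) a) := by
  intro ξ
  have hW : ∀ t : nonZeroDivisors A,
      algebraMap A (Localization S) t ∈ nonZeroDivisors (Localization S) := fun t =>
    IsLocalization.map_nonZeroDivisors_le S (Localization S) ⟨t, t.2, rfl⟩
  have hU : ∀ t : nonZeroDivisors A,
      IsUnit (algebraMap A (FractionRing (Localization S)) t) := fun t => by
    rw [IsScalarTower.algebraMap_apply A (Localization S) (FractionRing (Localization S))]
    exact IsLocalization.map_units (FractionRing (Localization S))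
      (⟨_, hW t⟩ : nonZeroDivisors (Localization S))
  letI : Algebra (FractionRing A) (FractionRing (Localization S)) :=
    (IsLocalization.lift (S := FractionRing A) hU).toAlgebra
  have t1 : IsScalarTower A (FractionRing A) (FractionRing (Localization S)) :=
    IsScalarTower.of_algebraMap_eq (fun x => (IsLocalization.lift_eq hU x).symm)
  have t2 : IsLocalization (Algebra.algebraMapSubmonoid (FractionRing A) S)
      (FractionRing (Localization S)) := by
    refine ⟨⟨?_, ?_, ?_⟩⟩
    · rintro ⟨_, s, hs, rfl⟩
      dsimp only
      rw [← IsScalarTower.algebraMap_apply,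
        IsScalarTower.algebraMap_apply A (Localization S) (FractionRing (Localization S))]
      exact (IsLocalization.map_units (Localization S) (⟨s, hs⟩ : S)).map _
    · intro z
      obtain ⟨⟨β, b'⟩, hz⟩ := IsLocalization.surj (nonZeroDivisors (Localization S)) z
      obtain ⟨⟨x, s1⟩, hx⟩ := IsLocalization.surj S β
      obtain ⟨⟨b, s2⟩, hb⟩ := IsLocalization.surj S (b' : Localization S)
      dsimp only at hz hx hb
      have hbW : algebraMap A (Localization S) b ∈ nonZeroDivisors (Localization S) := by
        rw [← hb]
        exact mul_mem b'.2 (IsLocalization.map_units (Localization S) s2).mem_nonZeroDivisors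
      obtain ⟨c, t, s, ht, hs, h⟩ := aux_key A hS1 S b hbW
      refine ⟨⟨IsLocalization.mk' (FractionRing A) (x * s2 * c) (⟨t, ht⟩ : nonZeroDivisors A),
        ⟨_, s1 * s, mul_mem s1.2 hs, rfl⟩⟩, ?_⟩
      dsimp only
      rw [← (hU ⟨t, ht⟩).mul_left_inj, ← IsScalarTower.algebraMap_apply,
        IsScalarTower.algebraMap_apply A (FractionRing A) (FractionRing (Localization S)) t,
        ← map_mul, IsLocalization.mk'_spec (FractionRing A) (x * s2 * c) (⟨t, ht⟩ : nonZeroDivisors A),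
        ← IsScalarTower.algebraMap_apply, ← IsScalarTower.algebraMap_apply]
      have hx' := congrArg (algebraMap (Localization S) (FractionRing (Localization S))) hx
      have hb' := congrArg (algebraMap (Localization S) (FractionRing (Localization S))) hb
      have h' := congrArg (algebraMap A (FractionRing (Localization S))) h
      simp only [map_mul, ← IsScalarTower.algebraMap_apply] at hx' hb' h' ⊢
      set φ := algebraMap A (FractionRing (Localization S))
      linear_combination (φ s2 * φ c) * hx' + (φ s1 * φ s2 * φ c) * hz - z * φ s1 * h' 
        - z * φ s1 * φ c * hb'
    · intro k k' hk
      obtain ⟨⟨a, t⟩, ha⟩ := IsLocalization.surj (nonZeroDivisors A) k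
      obtain ⟨⟨a', t'⟩, ha'⟩ := IsLocalization.surj (nonZeroDivisors A) k'
      dsimp only at ha ha'
      have h1 := congrArg (algebraMap (FractionRing A) (FractionRing (Localization S))) ha
      have h1' := congrArg (algebraMap (FractionRing A) (FractionRing (Localization S))) ha'
      rw [map_mul, ← IsScalarTower.algebraMap_apply, ← IsScalarTower.algebraMap_apply] at h1 h1'
      have h2 : algebraMap A (Localization S) (a * t') = algebraMap A (Localization S) (a' * t) := by
        apply IsFractionRing.injective (Localization S) (FractionRing (Localization S))
        rw [← IsScalarTower.algebraMap_apply, ← IsScalarTower.algebraMap_apply, map_mul, map_mul,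
          ← h1, ← h1', hk]
        ring
      obtain ⟨s, hs⟩ := (IsLocalization.eq_iff_exists S (Localization S)).mp h2
      refine ⟨⟨_, s, s.2, rfl⟩, ?_⟩
      dsimp only
      have ht := IsLocalization.map_units (FractionRing A) (t * t')
      rw [← ht.mul_left_inj]
      have h3 := congrArg (algebraMap A (FractionRing A)) hs
      simp only [map_mul, Submonoid.coe_mul, ← ha, ← ha'] at h3 ⊢
      linear_combination h3
  refine (aux_strict (B := Localization S) (K := FractionRing A) S ξ).trans ?_
  constructor
  · rintro ⟨x, s, hs, hx, h⟩
    obtain ⟨a, t, rfl⟩ := IsLocalization.exists_mk'_eq (nonZeroDivisors A) x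
    refine ⟨a, t, t.2, s, hs, hx, ?_⟩
    rw [← IsScalarTower.algebraMap_apply, ← IsScalarTower.algebraMap_apply, mul_comm (t : A), map_mul,
      ← mul_assoc, h, IsScalarTower.algebraMap_apply A (FractionRing A) (FractionRing (Localization S)) t,
      ← map_mul, IsLocalization.mk'_spec, ← IsScalarTower.algebraMap_apply]
  · rintro ⟨a, t, ht, s, hs, hx, h⟩
    refine ⟨_, s, hs, hx, ?_⟩
    rw [← (hU ⟨t, ht⟩).mul_left_inj]
    rw [← IsScalarTower.algebraMap_apply, ← IsScalarTower.algebraMap_apply, mul_comm (t : A), map_mul,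
      ← mul_assoc] at h
    dsimp only
    rw [h, IsScalarTower.algebraMap_apply A (FractionRing A) (FractionRing (Localization S)) t,
      ← map_mul, IsLocalization.mk'_spec (FractionRing A) a (⟨t, ht⟩ : nonZeroDivisors A),
      ← IsScalarTower.algebraMap_apply]
end

section
/- Let A be a Noetherian ring satisfying Serre's condition (S₁). Then A is strictly closed in Ā if and only if A_P is strictly closed in the integral closure of A_P in Q(A_P) for every P ∈ X₁(A). -/
open scoped TensorProduct

section helpers

theorem smulreg_aux {R : Type*} [CommRing R] {I : Ideal R} {y z : R}
    (h : IsSMulRegular (R ⧸ I) y) (hz : y * z ∈ I) : z ∈ I := by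
  have h1 : y • (Submodule.Quotient.mk z : R ⧸ I) = y • (0 : R ⧸ I) := by
    rw [smul_zero, ← Submodule.Quotient.mk_smul, smul_eq_mul, Submodule.Quotient.mk_eq_zero]
    exact hz
  exact (Submodule.Quotient.mk_eq_zero I).1 (h h1)

theorem depth1_aux {R : Type*} [CommRing R] [IsLocalRing R] (h : RingDepthGE R 1) :
    ∃ y ∈ IsLocalRing.maximalIdeal R, ∀ z : R, y * z = 0 → z = 0 := by
  obtain ⟨xs, hl, hm, hr⟩ := h
  obtain ⟨y, rfl⟩ := List.length_eq_one_iff.1 hl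
  refine ⟨y, hm y (by simp), fun z hz => ?_⟩
  have := smulreg_aux (z := z) (hr 0 (by simp)) (by simp [hz])
  simpa using this

theorem depth2_aux {R : Type*} [CommRing R] [IsLocalRing R] (h : RingDepthGE R 2) :
    ∃ y₁ ∈ IsLocalRing.maximalIdeal R, ∃ y₂ ∈ IsLocalRing.maximalIdeal R,
      (∀ z : R, y₁ * z = 0 → z = 0) ∧ ∀ z : R, y₁ ∣ y₂ * z → y₁ ∣ z := by
  obtain ⟨xs, hl, hm, hr⟩ := h
  obtain ⟨y₁, y₂, rfl⟩ := List.length_eq_two.1 hl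
  refine ⟨y₁, hm _ (by simp), y₂, hm _ (by simp), fun z hz => ?_, fun z hz => ?_⟩
  · have := smulreg_aux (z := z) (hr 0 (by simp)) (by simp [hz])
    simpa using this
  · have := smulreg_aux (z := z) (hr 1 (by simp))
      (by simpa [Ideal.mem_span_singleton] using hz)
    simpa [Ideal.mem_span_singleton] using this

theorem not_depth2 {R : Type*} [CommRing R] [IsLocalRing R] (s z : R)
    (hs : ∀ w : R, s * w = 0 → w = 0) (hz : ¬ s ∣ z)
    (hm : ∀ y ∈ IsLocalRing.maximalIdeal R, s ∣ y * z) : ¬ RingDepthGE R 2 := by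
  intro h
  obtain ⟨y₁, h₁, y₂, h₂, r₁, r₂⟩ := depth2_aux h
  obtain ⟨w, hw⟩ := hm y₁ h₁
  obtain ⟨v, hv⟩ := hm y₂ h₂
  have : y₁ ∣ w := r₂ w ⟨v, by
    have := hs (y₂ * w - y₁ * v) (by linear_combination y₁ * hv - y₂ * hw)
    linear_combination this⟩
  obtain ⟨t, rfl⟩ := this
  apply hz
  refine ⟨t, ?_⟩
  have := r₁ (z - s * t) (by linear_combination hw)
  linear_combination this

/-- generic form of membership in the strict closure -/
def SCmem (A Q : Type*) [CommRing A] [CommRing Q] [Algebra A Q] (x : Q) : Prop :=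
  ∃ hx : x ∈ integralClosure A Q,
    ((⟨x, hx⟩ : integralClosure A Q) ⊗ₜ[A] (1 : integralClosure A Q)) =
    (1 : integralClosure A Q) ⊗ₜ[A] (⟨x, hx⟩ : integralClosure A Q)

variable {A A' Q Q' : Type*} [CommRing A] [CommRing A'] [CommRing Q] [CommRing Q']
  [Algebra A A'] [Algebra A Q] [Algebra A' Q'] [Algebra Q Q'] [Algebra A Q']
  [IsScalarTower A A' Q'] [IsScalarTower A Q Q']

variable (A A' Q Q') in
/-- the induced map on integral closures -/
noncomputable def icMap : integralClosure A Q →ₐ[A] integralClosure A' Q' :=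
  AlgHom.codRestrict ((IsScalarTower.toAlgHom A Q Q').comp (integralClosure A Q).val)
    ((integralClosure A' Q').restrictScalars A) (fun x => by
      have h : IsIntegral A (algebraMap Q Q' x.1) := IsIntegral.algebraMap x.2
      exact h.tower_top)

theorem icMap_coe (x : integralClosure A Q) : (icMap A A' Q Q' x : Q') = algebraMap Q Q' x := rfl

variable (A A' Q Q') in
theorem SCmem.map {x : Q} (h : SCmem A Q x) : SCmem A' Q' (algebraMap Q Q' x) := by
  obtain ⟨hx, h⟩ := h
  refine ⟨(icMap A A' Q Q' ⟨x, hx⟩).2, ?_⟩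
  have h2 := congrArg (TensorProduct.mapOfCompatibleSMul A' A A' _ _ ∘
    TensorProduct.map (icMap A A' Q Q').toLinearMap (icMap A A' Q Q').toLinearMap) h
  simp only [Function.comp_apply, TensorProduct.map_tmul, AlgHom.toLinearMap_apply, map_one,
    TensorProduct.mapOfCompatibleSMul_tmul] at h2
  exact h2

theorem SCmem.exists_of_loc (M : Submonoid A) [IsLocalization M A']
    [IsLocalization (Algebra.algebraMapSubmonoid Q M) Q'] {y : Q'} (h : SCmem A' Q' y) :
    ∃ u ∈ M, ∃ x : Q, SCmem A Q x ∧ algebraMap Q Q' x = u • y := by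
  obtain ⟨hy, h⟩ := h
  let : Algebra (integralClosure A Q) (integralClosure A' Q') :=
    (icMap A A' Q Q').toRingHom.toAlgebra
  have : IsScalarTower (integralClosure A Q) (integralClosure A' Q') Q' :=
    IsScalarTower.of_algebraMap_eq (fun _ => rfl)
  have : IsScalarTower A (integralClosure A Q) (integralClosure A' Q') :=
    IsScalarTower.of_algebraMap_eq (fun a => ((icMap A A' Q Q').commutes a).symm)
  have hloc := IsLocalization.integralClosure (R := A) (S := Q) (Rf := A') (Sf := Q') M
  have hlm : IsLocalizedModule M (icMap A A' Q Q').toLinearMap :=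
    isLocalizedModule_iff_isLocalization.mpr hloc
  have h2 := congrArg (IsLocalization.moduleTensorEquiv M A' (integralClosure A' Q')
    (integralClosure A' Q')) h
  have h3 : (⟨y, hy⟩ : integralClosure A' Q') ⊗ₜ[A] (1 : integralClosure A' Q') =
    (1 : integralClosure A' Q') ⊗ₜ[A] ⟨y, hy⟩ := h2
  obtain ⟨⟨x, u⟩, hxu⟩ := IsLocalizedModule.surj M (icMap A A' Q Q').toLinearMap ⟨y, hy⟩
  have h4 : TensorProduct.map (icMap A A' Q Q').toLinearMap (icMap A A' Q Q').toLinearMap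
      (x ⊗ₜ 1) = TensorProduct.map (icMap A A' Q Q').toLinearMap (icMap A A' Q Q').toLinearMap
      (1 ⊗ₜ x) := by
    have := congrArg (u • ·) h3
    simp only [TensorProduct.map_tmul, ← hxu, AlgHom.toLinearMap_apply, map_one,
      TensorProduct.tmul_smul, ← TensorProduct.smul_tmul']
    exact this
  obtain ⟨c, hc⟩ := IsLocalizedModule.exists_of_eq (S := M) h4
  refine ⟨c * u, (c * u).2, (c : A) • (x : Q), ⟨Subalgebra.smul_mem _ x.2 _, ?_⟩, ?_⟩
  · rw [Submonoid.smul_def, Submonoid.smul_def, TensorProduct.smul_tmul', ← TensorProduct.tmul_smul] at hc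
    exact hc
  · have := congrArg Subtype.val hxu
    rw [AlgHom.toLinearMap_apply, icMap_coe] at this
    rw [← IsScalarTower.toAlgHom_apply A Q Q', map_smul, IsScalarTower.toAlgHom_apply, ← this, mul_smul]
    rfl

theorem assoc_minimal [IsNoetherianRing A] (hS1 : SerreSCondition A 1) (P : Ideal A)
    (hP : P ∈ associatedPrimes A A) : P ∈ minimalPrimes A := by
  rw [AssociatedPrimes.mem_iff, isAssociatedPrime_iff] at hP
  obtain ⟨hp, x, hx⟩ := hP
  rw [← Ideal.height_eq_zero_iff]
  by_contra hne
  have h1 : (1 : ℕ∞) ≤ P.height := Order.one_le_iff_ne_zero.2 hne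
  have hd := hS1 P 1 le_rfl (by
    rw [IsLocalization.AtPrime.ringKrullDim_eq_height P]
    exact WithBot.coe_le_coe.2 h1)
  obtain ⟨y, hy, hr⟩ := depth1_aux hd
  obtain ⟨a, s, rfl⟩ := IsLocalization.exists_mk'_eq P.primeCompl y
  have ha : a ∈ P := (IsLocalization.AtPrime.mk'_mem_maximal_iff _ P a s).1 hy
  have hax : a * x = 0 := by
    rw [hx, Submodule.mem_colon_singleton] at ha
    simpa using ha
  have h0 := hr (algebraMap A _ x) (by
    rw [← IsLocalization.mk'_one (M := P.primeCompl), ← IsLocalization.mk'_mul, hax,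
      IsLocalization.mk'_zero])
  rw [IsLocalization.map_eq_zero_iff P.primeCompl] at h0
  obtain ⟨t, ht⟩ := h0
  apply t.2
  have h5 : (t : A) ∈ (⊥ : Submodule A A).colon {x} := by
    rw [Submodule.mem_colon_singleton]
    simpa using ht
  exact hx.ge h5

theorem artin_frac [IsNoetherianRing A] (hS1 : SerreSCondition A 1) :
    IsArtinianRing (FractionRing A) := by
  have : IsNoetherianRing (FractionRing A) :=
    IsLocalization.isNoetherianRing (nonZeroDivisors A) _ inferInstance
  have : Ring.KrullDimLE 0 (FractionRing A) := by
    apply Ring.KrullDimLE.mk₀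
    intro I hI
    obtain ⟨m, hm, hIm⟩ := Ideal.exists_le_maximal I hI.ne_top
    have hdisj := ((IsLocalization.isPrime_iff_isPrime_disjoint (nonZeroDivisors A)
      (FractionRing A) m).1 hm.isPrime).2
    obtain ⟨P, hPa, hP⟩ : ∃ P ∈ associatedPrimes A A, Ideal.comap (algebraMap A _) m ≤ P :=
      ((Ideal.comap (algebraMap A _) m).subset_union_prime_finite
        (associatedPrimes.finite ..) (f := id) 0 0 fun _ h _ _ ↦ h.1).1 <|
        biUnion_associatedPrimes_eq_compl_nonZeroDivisors A ▸ hdisj.symm.subset_compl_right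
    have hmin := assoc_minimal hS1 P hPa
    have hIc : (Ideal.comap (algebraMap A (FractionRing A)) I).IsPrime := inferInstance
    have hle : Ideal.comap (algebraMap A (FractionRing A)) I ≤
      Ideal.comap (algebraMap A (FractionRing A)) m := Ideal.comap_mono hIm
    have h2 : P ≤ Ideal.comap (algebraMap A (FractionRing A)) I :=
      hmin.2 ⟨hIc, bot_le⟩ (hle.trans hP)
    have h3 : m ≤ I := by
      rw [← IsLocalization.map_under (nonZeroDivisors A) (FractionRing A) m,
        ← IsLocalization.map_under (nonZeroDivisors A) (FractionRing A) I]
      exact Ideal.map_mono (hP.trans h2)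
    rwa [le_antisymm hIm h3]
  exact IsNoetherianRing.isArtinianRing_of_krullDimLE_zero

variable (A A') in
/-- induced map on total fraction rings -/
noncomputable def fracMap (M : Submonoid A) [IsLocalization M A'] :
    FractionRing A →+* FractionRing A' :=
  IsLocalization.map (M := nonZeroDivisors A) (T := nonZeroDivisors A') (FractionRing A')
    (algebraMap A A') (Submonoid.map_le_iff_le_comap.1 (IsLocalization.map_nonZeroDivisors_le M A'))

theorem fracMap_alg (M : Submonoid A) [IsLocalization M A'] (a : A) :
    fracMap A A' M (algebraMap A _ a) = algebraMap A' _ (algebraMap A A' a) :=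
  IsLocalization.map_eq _ a

theorem frac_isLocalization (M : Submonoid A) [IsLocalization M A']
    [IsArtinianRing (FractionRing A)] [Algebra (FractionRing A) (FractionRing A')]
    (h : ∀ a : A, algebraMap (FractionRing A) (FractionRing A') (algebraMap A _ a) =
      algebraMap A' _ (algebraMap A A' a)) :
    IsLocalization (Algebra.algebraMapSubmonoid (FractionRing A) M) (FractionRing A') := by
  have hinj : Function.Injective (algebraMap A' (FractionRing A')) :=
    IsFractionRing.injective A' (FractionRing A')
  refine ⟨⟨?_, ?_, ?_⟩⟩
  · rintro ⟨_, m, hm, rfl⟩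
    change IsUnit (algebraMap (FractionRing A) (FractionRing A') (algebraMap A _ m))
    rw [h]
    exact (IsLocalization.map_units A' ⟨m, hm⟩).map _
  · intro y
    obtain ⟨b, s, rfl⟩ := IsLocalization.exists_mk'_eq (nonZeroDivisors A') y
    obtain ⟨⟨b₁, u⟩, hb⟩ := IsLocalization.surj M b
    obtain ⟨⟨s₁, v⟩, hs⟩ := IsLocalization.surj M (s : A')
    obtain ⟨n, e, he⟩ := IsArtinian.exists_pow_succ_smul_dvd
      (algebraMap A (FractionRing A) s₁) (1 : FractionRing A)
    have hunit : IsUnit (algebraMap A' (FractionRing A') (algebraMap A A' s₁)) := by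
      rw [← hs, map_mul]
      exact (IsLocalization.map_units _ s).mul ((IsLocalization.map_units A' v).map _)
    have he2 : algebraMap A' (FractionRing A') (algebraMap A A' s₁) *
        algebraMap (FractionRing A) (FractionRing A') e = 1 := by
      have := congrArg (algebraMap (FractionRing A) (FractionRing A')) he
      simp only [smul_eq_mul, map_mul, map_pow, h, map_one, pow_succ, mul_assoc] at this
      exact (hunit.pow n).mul_left_cancel this
    refine ⟨⟨algebraMap A _ (b₁ * v) * e, ⟨_, u, u.2, rfl⟩⟩, ?_⟩
    change _ * algebraMap (FractionRing A) (FractionRing A') (algebraMap A _ (u : A)) = _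
    have hb' := congrArg (algebraMap A' (FractionRing A')) hb
    have hs' := congrArg (algebraMap A' (FractionRing A')) hs
    have hy := IsLocalization.mk'_spec (FractionRing A') b s
    simp only [map_mul, h] at hb' hs' ⊢
    set y := IsLocalization.mk' (FractionRing A') b s
    set E := algebraMap (FractionRing A) (FractionRing A') e
    rw [← hb', ← hy]
    rw [← hs'] at he2
    linear_combination (-(y * algebraMap A' (FractionRing A') (algebraMap A A' u))) * he2
  · intro x y hxy
    obtain ⟨a, s, rfl⟩ := IsLocalization.exists_mk'_eq (nonZeroDivisors A) x
    obtain ⟨b, t, rfl⟩ := IsLocalization.exists_mk'_eq (nonZeroDivisors A) y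
    have hx := IsLocalization.mk'_spec (FractionRing A) a s
    have hy := IsLocalization.mk'_spec (FractionRing A) b t
    set x := IsLocalization.mk' (FractionRing A) a s
    set y := IsLocalization.mk' (FractionRing A) b t
    have h1 : algebraMap A' (FractionRing A') (algebraMap A A' (a * t)) =
        algebraMap A' (FractionRing A') (algebraMap A A' (b * s)) := by
      rw [← h, ← h, map_mul (algebraMap A (FractionRing A)), map_mul (algebraMap A (FractionRing A)), ← hx, ← hy]
      simp only [map_mul, hxy]
      ring
    obtain ⟨c, hc⟩ := (IsLocalization.eq_iff_exists M A').1 (hinj h1)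
    refine ⟨⟨_, c, c.2, rfl⟩, ?_⟩
    change algebraMap A _ (c : A) * x = algebraMap A _ (c : A) * y
    have hc' := congrArg (algebraMap A (FractionRing A)) hc
    simp only [map_mul, ← hx, ← hy] at hc'
    apply (IsLocalization.map_units (FractionRing A) s).mul_left_cancel
    apply (IsLocalization.map_units (FractionRing A) t).mul_left_cancel
    linear_combination hc'

end helpers

/-- For a Noetherian ring `A` with `(S₁)`: `A` is strictly closed in `Ā` iff `A_P` is
strictly closed in the integral closure of `A_P` in `Q(A_P)` for every `P ∈ X₁(A)`. -/
theorem strictlyClosed_iff_forall_X1 (A : Type*) [CommRing A] [IsNoetherianRing A]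
    (hS1 : SerreSCondition A 1) :
    IsStrictlyClosed A ↔
      ∀ (P : Ideal A) [P.IsPrime], ¬ RingDepthGE (Localization.AtPrime P) 2 →
        IsStrictlyClosed (Localization.AtPrime P) := by
  constructor
  · intro hA P _ _ y hy
    have := artin_frac hS1
    let : Algebra (FractionRing A) (FractionRing (Localization.AtPrime P)) :=
      (fracMap A (Localization.AtPrime P) P.primeCompl).toAlgebra
    have hcomp := fracMap_alg (A := A) (A' := Localization.AtPrime P) P.primeCompl
    have : IsScalarTower A (FractionRing A) (FractionRing (Localization.AtPrime P)) :=
      IsScalarTower.of_algebraMap_eq (fun a => (hcomp a).symm)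
    have := frac_isLocalization (A := A) (A' := Localization.AtPrime P) P.primeCompl hcomp
    have hy' : SCmem (Localization.AtPrime P) (FractionRing (Localization.AtPrime P)) y := hy
    obtain ⟨u, hu, x, hx, hxy⟩ := SCmem.exists_of_loc (A := A) (Q := FractionRing A)
      P.primeCompl hy'
    obtain ⟨a, rfl⟩ := hA x hx
    refine ⟨IsLocalization.mk' _ a (⟨u, hu⟩ : P.primeCompl), ?_⟩
    have hun := (IsLocalization.map_units (Localization.AtPrime P)
      (⟨u, hu⟩ : P.primeCompl)).map (algebraMap _ (FractionRing (Localization.AtPrime P)))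
    apply hun.mul_left_cancel
    rw [← map_mul, mul_comm, IsLocalization.mk'_spec, ← hcomp]
    refine hxy.trans ?_
    rw [Algebra.smul_def]
    rfl
  · intro hP x hx
    obtain ⟨b, s, rfl⟩ := IsLocalization.exists_mk'_eq (nonZeroDivisors A) x
    have hspec := IsLocalization.mk'_spec (FractionRing A) b s
    by_cases hbs : (s : A) ∣ b
    · obtain ⟨c, rfl⟩ := hbs
      exact ⟨c, by rw [IsLocalization.mk'_mul_cancel_left]⟩
    exfalso
    obtain ⟨P, hPa, hle⟩ := exists_le_isAssociatedPrime_of_isNoetherianRing A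
      (Ideal.Quotient.mk (Ideal.span {(s : A)}) b)
      (by rwa [Ne, Ideal.Quotient.eq_zero_iff_mem, Ideal.mem_span_singleton])
    rw [isAssociatedPrime_iff] at hPa
    obtain ⟨hPp, z, hz⟩ := hPa
    obtain ⟨z, rfl⟩ := Ideal.Quotient.mk_surjective z
    have hmemP : ∀ a : A, a ∈ P ↔ (s : A) ∣ a * z := fun a => by
      rw [hz, Submodule.mem_colon_singleton, ← Ideal.mem_span_singleton,
        ← Ideal.Quotient.eq_zero_iff_mem]
      rfl
    have hle' : ∀ a : A, (s : A) ∣ a * b → a ∈ P := fun a ha => hle (by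
      rw [Submodule.mem_colon_singleton]
      rw [← Ideal.mem_span_singleton, ← Ideal.Quotient.eq_zero_iff_mem] at ha
      exact ha)
    have hsreg : algebraMap A (Localization.AtPrime P) s ∈
        nonZeroDivisors (Localization.AtPrime P) :=
      IsLocalization.map_nonZeroDivisors_le P.primeCompl _ ⟨s, s.2, rfl⟩
    have hdvd : ∀ a : A, algebraMap A (Localization.AtPrime P) s ∣ algebraMap A _ a →
        ∃ t : A, t ∉ P ∧ (s : A) ∣ t * a := by
      rintro a ⟨w, hw⟩
      obtain ⟨⟨c, u⟩, hc⟩ := IsLocalization.surj P.primeCompl w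
      have : algebraMap A (Localization.AtPrime P) (u * a) = algebraMap A _ (s * c) := by
        simp only [map_mul, hw, ← hc]
        ring
      obtain ⟨v, hv⟩ := (IsLocalization.eq_iff_exists P.primeCompl _).1 this
      refine ⟨v * u, (v * u).2, v * c, ?_⟩
      linear_combination hv
    have hdepth : ¬ RingDepthGE (Localization.AtPrime P) 2 := by
      refine not_depth2 (algebraMap A _ s) (algebraMap A _ z)
        (fun w hw => (mem_nonZeroDivisors_iff.1 hsreg).1 w hw) ?_ ?_
      · intro hd
        obtain ⟨t, ht, hd⟩ := hdvd z hd
        exact ht ((hmemP t).2 hd)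
      · intro y hy
        obtain ⟨a, t, rfl⟩ := IsLocalization.exists_mk'_eq P.primeCompl y
        have ha : a ∈ P := (IsLocalization.AtPrime.mk'_mem_maximal_iff _ P a t).1 hy
        obtain ⟨c, hc⟩ := (hmemP a).1 ha
        refine ⟨IsLocalization.mk' _ c t, ?_⟩
        rw [← IsLocalization.mk'_one (M := P.primeCompl) _ z,
          ← IsLocalization.mk'_one (M := P.primeCompl) _ (s : A), ← IsLocalization.mk'_mul,
          ← IsLocalization.mk'_mul, hc, mul_one, one_mul]
    let : Algebra (FractionRing A) (FractionRing (Localization.AtPrime P)) :=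
      (fracMap A (Localization.AtPrime P) P.primeCompl).toAlgebra
    have hcomp := fracMap_alg (A := A) (A' := Localization.AtPrime P) P.primeCompl
    have : IsScalarTower A (FractionRing A) (FractionRing (Localization.AtPrime P)) :=
      IsScalarTower.of_algebraMap_eq (fun a => (hcomp a).symm)
    have hx' : SCmem A (FractionRing A) (IsLocalization.mk' (FractionRing A) b s) := hx
    obtain ⟨a, ha⟩ := hP P hdepth _
      (SCmem.map A (Localization.AtPrime P) _ (FractionRing (Localization.AtPrime P)) hx')
    have h1 : algebraMap A (Localization.AtPrime P) b = algebraMap A _ s * a := by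
      apply IsFractionRing.injective (Localization.AtPrime P)
        (FractionRing (Localization.AtPrime P))
      rw [← hcomp, ← hspec, map_mul, map_mul, ha, hcomp, mul_comm]
      rfl
    obtain ⟨t, ht, hd⟩ := hdvd b ⟨a, h1⟩
    exact ht (hle' t hd)
end

section
/- Let A be a Noetherian semi-local ring such that A_M is a one-dimensional Cohen–Macaulay local ring for every maximal ideal M of A. Then A is strictly closed in Ā if and only if A is an Arf ring. -/
open scoped TensorProduct

/-- `a` belongs to the integral closure of the ideal `I`: it satisfies an equation
`a ^ n + c 1 * a ^ (n - 1) + ⋯ + c n = 0` with `c i ∈ I ^ i`, for some `n ≥ 1`. -/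
def MemIdealIntegralClosure {A : Type*} [CommRing A] (I : Ideal A) (a : A) : Prop :=
  ∃ n : ℕ, 0 < n ∧ ∃ c : ℕ → A,
    (∀ i ∈ Finset.Icc 1 n, c i ∈ I ^ i) ∧
    a ^ n + ∑ i ∈ Finset.Icc 1 n, c i * a ^ (n - i) = 0

/-- The integral closure `Ī` of an ideal `I` of `A`, as a subset of `A`. -/
def idealIntegralClosure {A : Type*} [CommRing A] (I : Ideal A) : Set A :=
  {a | MemIdealIntegralClosure I a}

/-- An ideal `I` is integrally closed if `Ī = I`. -/
def Ideal.IsIntegrallyClosedIdeal {A : Type*} [CommRing A] (I : Ideal A) : Prop :=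
  idealIntegralClosure I = (I : Set A)

/-- `A` is an *Arf ring*: (1) every integrally closed ideal of `A` containing a
non-zerodivisor has a principal reduction, i.e. `I ^ (n + 1) = a * I ^ n` for some
`n ≥ 0` and `a ∈ I`; and (2) whenever `x, y, z ∈ A` with `x` a non-zerodivisor and
`y/x, z/x` integral over `A` in `Q(A)`, then `y * z ∈ x A`. -/
def IsArfRing (A : Type*) [CommRing A] : Prop :=
  (∀ I : Ideal A, Ideal.IsIntegrallyClosedIdeal I →
      (∃ x ∈ I, x ∈ nonZeroDivisors A) →
      ∃ (n : ℕ) (a : A), a ∈ I ∧ I ^ (n + 1) = Ideal.span {a} * I ^ n) ∧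
  IsWeaklyArfRing A

theorem arf_charpoly {A Q : Type*} [CommRing A] [CommRing Q] [Algebra A Q]
    (N : Submodule A Q) (hN : N.FG) (u : Q) (hu : IsUnit u) (huN : u ∈ N) (I : Ideal A) (q : Q)
    (h : ∀ n ∈ N, q * n ∈ I • N) :
    ∃ p : Polynomial A, p.Monic ∧ (∀ k, p.coeff k ∈ I ^ (p.natDegree - k)) ∧
      Polynomial.aeval q p = 0 := by
  have hfin : Module.Finite A N := Module.Finite.iff_fg.mpr hN
  have hle : I • N ≤ N := Submodule.smul_le_right
  let f : Module.End A N := (LinearMap.mulLeft A q).restrict (p := N) (q := N)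
    (fun n hn => hle (h n hn))
  have hf : LinearMap.range f ≤ I • ⊤ := by
    rintro _ ⟨n, rfl⟩
    have : (f n : Q) ∈ Submodule.map N.subtype (I • ⊤) := by
      rw [Submodule.map_smul'']
      simpa [f] using h n n.2
    obtain ⟨y, hy, hy'⟩ := this
    have : y = f n := Subtype.ext hy'
    exact this ▸ hy
  obtain ⟨p, hp, -, hc, h0⟩ :=
    LinearMap.exists_monic_and_natDegree_eq_and_coeff_mem_pow_and_aeval_eq_zero A f I hf
  refine ⟨p, hp, hc, ?_⟩
  have key : ∀ (p : Polynomial A) (n : N),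
      ((Polynomial.aeval f p) n : Q) = Polynomial.aeval q p * n := by
    intro p
    induction p using Polynomial.induction_on' with
    | add p q hp hq => intro n; simp [hp, hq, add_mul]
    | monomial k a =>
      intro n
      simp only [Polynomial.aeval_monomial, Module.End.mul_apply, Module.algebraMap_end_apply]
      have : ∀ n : N, ((f ^ k) n : Q) = q ^ k * n := by
        induction k with
        | zero => simp
        | succ k ih =>
          intro n
          rw [pow_succ, Module.End.mul_apply, ih]
          simp [f, pow_succ, mul_assoc]
      simp [this, Algebra.smul_def, mul_assoc]
  have := key p ⟨u, huN⟩
  rw [h0] at this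
  simp at this
  exact hu.mul_left_eq_zero.mp this.symm

theorem arf_integral {A Q : Type*} [CommRing A] [CommRing Q] [Algebra A Q]
    (N : Submodule A Q) (hN : N.FG) (u : Q) (hu : IsUnit u) (huN : u ∈ N) (q : Q)
    (h : ∀ n ∈ N, q * n ∈ N) : IsIntegral A q := by
  obtain ⟨p, hp, -, h0⟩ := arf_charpoly N hN u hu huN ⊤ q (by simpa using h)
  exact ⟨p, hp, h0⟩

/-- the tensor identity -/
theorem arf_tensor {A O : Type*} [CommRing A] [CommRing O] [Algebra A O] (c : O)
    (J : Submodule A O) (hJ : ∀ j ∈ J, ∃ a : A, algebraMap A O a = c * j) (d : ℕ) (u : O)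
    (hu : IsUnit u) (h1 : u ∈ J ^ d) (h2 : u ∈ J ^ (d + 1)) :
    c ⊗ₜ[A] (1 : O) = (1 : O) ⊗ₜ[A] c := by
  have sw : ∀ a : A, ∀ x y : O, (algebraMap A O a * x) ⊗ₜ[A] y = x ⊗ₜ[A] (algebraMap A O a * y) := by
    intro a x y
    rw [← Algebra.smul_def, ← Algebra.smul_def, TensorProduct.smul_tmul]
  have key0 : ∀ α ∈ J, ∀ β ∈ J, α ⊗ₜ[A] (c * β) = β ⊗ₜ[A] (c * α) := by
    intro α hα β hβ
    obtain ⟨a, ha⟩ := hJ α hα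
    obtain ⟨b, hb⟩ := hJ β hβ
    have e1 := sw b α 1
    have e2 := sw a β 1
    rw [hb] at e1
    rw [ha] at e2
    simp only [mul_one] at e1 e2
    rw [← e1, ← e2]
    ring_nf
  have key : ∀ d, ∀ X ∈ J ^ (d + 1), ∀ Y ∈ J ^ d, (c * X) ⊗ₜ[A] Y = Y ⊗ₜ[A] (c * X) := by
    intro d
    induction d with
    | zero =>
      intro X hX Y hY
      rw [zero_add, pow_one] at hX
      obtain ⟨a, ha⟩ := hJ X hX
      rw [pow_zero] at hY
      obtain ⟨b, rfl⟩ := Submodule.mem_one.mp hY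
      have e1 := sw a 1 (algebraMap A O b)
      have e2 := sw b 1 (algebraMap A O a)
      simp only [mul_one] at e1 e2
      rw [← ha, e1, e2, mul_comm]
    | succ d ih =>
      intro X hX Y hY
      rw [pow_succ'] at hX hY
      induction hX using Submodule.mul_induction_on' with
      | add x hx y hy h1 h2 => rw [mul_add, TensorProduct.add_tmul, TensorProduct.tmul_add, h1, h2]
      | mem_mul_mem α hα X hX =>
        induction hY using Submodule.mul_induction_on' with
        | add x hx y hy h1 h2 => rw [TensorProduct.add_tmul, TensorProduct.tmul_add, h1, h2]
        | mem_mul_mem β hβ Y hY =>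
          have e : (c * (α * X)) ⊗ₜ[A] (β * Y) = (α ⊗ₜ[A] β) * ((c * X) ⊗ₜ[A] Y) := by
            rw [Algebra.TensorProduct.tmul_mul_tmul]; ring_nf
          rw [e, ih X hX Y hY]
          have e : (α ⊗ₜ[A] β) * (Y ⊗ₜ[A] (c * X)) = (α ⊗ₜ[A] (c * β)) * (Y ⊗ₜ[A] X) := by
            rw [Algebra.TensorProduct.tmul_mul_tmul, Algebra.TensorProduct.tmul_mul_tmul]; ring_nf
          rw [e, key0 α hα β hβ, Algebra.TensorProduct.tmul_mul_tmul]
          ring_nf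
  have k := key d u h2 u h1
  obtain ⟨v, hv⟩ := hu.exists_right_inv
  have := congrArg (· * (v ⊗ₜ[A] v)) k
  simp only [Algebra.TensorProduct.tmul_mul_tmul, mul_assoc, hv, mul_one] at this
  exact this

set_option maxHeartbeats 2000000 in
theorem arf_local_power {A : Type*} [CommRing A] (a b : A) (I M : Ideal A) [hM : M.IsMaximal]
    (hI : I = Ideal.span {a} ⊔ Ideal.span {b}) (n : ℕ) (g : ℕ → A) (i0 : ℕ) (hi0 : i0 ≤ n)
    (hg : g i0 ∉ M) (hG : ∑ i ∈ Finset.range (n + 1), g i * (a ^ i * b ^ (n - i)) ∈ M * I ^ n)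
    (d : ℕ) (hd : n < d) :
    ∃ p ∈ I ^ d, ∃ N, d ≤ N ∧ I ^ N ≤ Ideal.span {p} * I ^ (N - d) ⊔ M * I ^ N := by
  classical
  have haI : a ∈ I := hI ▸ Ideal.mem_sup_left (Ideal.mem_span_singleton_self a)
  have hbI : b ∈ I := hI ▸ Ideal.mem_sup_right (Ideal.mem_span_singleton_self b)
  have hmon : ∀ i j k, i + j = k → a ^ i * b ^ j ∈ I ^ k := by
    rintro i j k rfl
    rw [pow_add]
    exact Ideal.mul_mem_mul (Ideal.pow_mem_pow haI i) (Ideal.pow_mem_pow hbI j)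
  set t := Nat.findGreatest (fun i => g i ∉ M) n with ht
  have htn : t ≤ n := Nat.findGreatest_le n
  have hgt : g t ∉ M := Nat.findGreatest_spec (P := fun i => g i ∉ M) hi0 hg
  have hgr : ∀ i, t < i → i ≤ n → g i ∈ M := fun i h1 h2 => by
    have := Nat.findGreatest_is_greatest (P := fun i => g i ∉ M) h1 h2
    simpa using this
  obtain ⟨l, hl⟩ : ∃ l, l * g t - 1 ∈ M := by
    obtain ⟨l, m, hm, h⟩ := hM.exists_inv hgt
    exact ⟨l, by rw [← h]; simpa using hm⟩
  set H := ∑ i ∈ Finset.range (t + 1), g i * (a ^ i * b ^ (t - i)) with hH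
  have hbH : b ^ (n - t) * H ∈ M * I ^ n := by
    have : n + 1 = (t + 1) + (n - t) := by omega
    rw [this, Finset.sum_range_add] at hG
    have e1 : ∑ x ∈ Finset.range (t + 1), g x * (a ^ x * b ^ (n - x)) = b ^ (n - t) * H := by
      rw [hH, Finset.mul_sum]
      refine Finset.sum_congr rfl fun i hi => ?_
      have : n - i = (n - t) + (t - i) := by have := Finset.mem_range.mp hi; omega
      rw [this, pow_add]; ring
    rw [e1] at hG
    refine (Ideal.add_mem_iff_left _ ?_).mp hG
    refine Ideal.sum_mem _ fun i hi => Ideal.mul_mem_mul (hgr _ (by omega) ?_) (hmon _ _ _ ?_)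
    all_goals have := Finset.mem_range.mp hi; omega
  have hHI : H ∈ I ^ t := by
    refine Ideal.sum_mem _ fun i hi => Ideal.mul_mem_left _ _ (hmon _ _ _ ?_)
    have := Finset.mem_range.mp hi; omega
  set p := b ^ d + l * (a ^ (d - t) * H) with hp
  have hpI : p ∈ I ^ d := by
    refine Ideal.add_mem _ (Ideal.pow_mem_pow hbI d) (Ideal.mul_mem_left _ _ ?_)
    have : d = (d - t) + t := by omega
    rw [this, pow_add]
    refine Ideal.mul_mem_mul ?_ hHI
    simpa using Ideal.pow_mem_pow haI (d - t)
  have hpa : a ^ d - p ∈ Ideal.span {b} * I ^ (d - 1) ⊔ M * I ^ d := by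
    have e : a ^ d - p = -(l * ∑ i ∈ Finset.range t, g i * (a ^ (d - t + i) * b ^ (t - i)))
        - b ^ d - (l * g t - 1) * a ^ d := by
      have : a ^ (d - t) * H = ∑ i ∈ Finset.range t, g i * (a ^ (d - t + i) * b ^ (t - i))
          + g t * a ^ d := by
        rw [hH, Finset.sum_range_succ, mul_add, Finset.mul_sum]
        congr 1
        · refine Finset.sum_congr rfl fun i hi => ?_
          rw [pow_add]; ring
        · have : d = (d - t) + t := by omega
          rw [this, pow_add]; simp; ring
      rw [hp, this]; ring
    rw [e]
    have hbm : ∀ i j, i + j = d → 0 < j → a ^ i * b ^ j ∈ Ideal.span {b} * I ^ (d - 1) := by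
      intro i j h1 h2
      obtain ⟨j, rfl⟩ : ∃ k, j = k + 1 := ⟨j - 1, by omega⟩
      have : a ^ i * b ^ (j + 1) = b * (a ^ i * b ^ j) := by ring
      rw [this]
      exact Ideal.mul_mem_mul (Ideal.mem_span_singleton_self b) (hmon _ _ _ (by omega))
    refine Ideal.sub_mem _ (Ideal.sub_mem _ (neg_mem ?_) ?_) ?_
    · refine Ideal.mem_sup_left (Ideal.mul_mem_left _ _ (Ideal.sum_mem _ fun i hi =>
        Ideal.mul_mem_left _ _ (hbm _ _ ?_ ?_)))
      all_goals have := Finset.mem_range.mp hi; omega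
    · refine Ideal.mem_sup_left ?_
      simpa using hbm 0 d (by omega) (by omega)
    · exact Ideal.mem_sup_right (Ideal.mul_mem_mul hl (Ideal.pow_mem_pow haI d))
  have hbp : b ^ (d + (n - t)) ∈ Ideal.span {p} * I ^ (n - t) ⊔ M * I ^ (d + (n - t)) := by
    have e : b ^ (d + (n - t)) = p * b ^ (n - t) - l * (a ^ (d - t) * (b ^ (n - t) * H)) := by
      rw [hp, pow_add]; ring
    rw [e]
    refine Ideal.sub_mem _ (Ideal.mem_sup_left (Ideal.mul_mem_mul (Ideal.mem_span_singleton_self p)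
      (Ideal.pow_mem_pow hbI _))) (Ideal.mem_sup_right (Ideal.mul_mem_left _ _ ?_))
    have : d + (n - t) = (d - t) + n := by omega
    rw [this, pow_add, mul_left_comm]
    exact Ideal.mul_mem_mul (Ideal.pow_mem_pow haI _) hbH
  have hId : ∀ d, I ^ (d + 1) ≤ Ideal.span {a ^ (d + 1)} ⊔ Ideal.span {b} * I ^ d := by
    intro d
    induction d with
    | zero => simp [hI]
    | succ d ih =>
      calc I ^ (d + 1 + 1) = I * I ^ (d + 1) := by rw [pow_succ']
        _ = Ideal.span {a} * I ^ (d + 1) ⊔ Ideal.span {b} * I ^ (d + 1) := by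
          nth_rewrite 1 [hI]; rw [Ideal.sup_mul]
        _ ≤ _ := by
          refine sup_le ((Ideal.mul_mono_right ih).trans ?_) le_sup_right
          rw [Ideal.mul_sup, Ideal.span_singleton_mul_span_singleton, ← pow_succ']
          refine sup_le_sup_left ?_ _
          rw [mul_left_comm, pow_succ' I]
          exact Ideal.mul_mono_right (Ideal.mul_mono_left (hI ▸ le_sup_left))
  have hId' : I ^ d ≤ Ideal.span {p} ⊔ (Ideal.span {b} * I ^ (d - 1) ⊔ M * I ^ d) := by
    obtain ⟨e, rfl⟩ : ∃ e, d = e + 1 := ⟨d - 1, by omega⟩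
    refine (hId e).trans (sup_le ?_ ?_)
    · rw [Ideal.span_singleton_le_iff_mem]
      have : a ^ (e + 1) = p + (a ^ (e + 1) - p) := by ring
      rw [this]
      exact Ideal.add_mem _ (Ideal.mem_sup_left (Ideal.mem_span_singleton_self p))
        (Ideal.mem_sup_right hpa)
    · exact le_sup_left.trans le_sup_right
  have hr : ∀ r, I ^ (d + r) ≤ Ideal.span {p} * I ^ r ⊔ (Ideal.span {b ^ (r + 1)} * I ^ (d - 1)
      ⊔ M * I ^ (d + r)) := by
    intro r
    induction r with
    | zero => simpa using hId'
    | succ r ih =>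
      calc I ^ (d + (r + 1)) = I * I ^ (d + r) := by rw [← add_assoc, pow_succ']
        _ ≤ _ := Ideal.mul_mono_right ih
        _ ≤ _ := by
          rw [Ideal.mul_sup, Ideal.mul_sup]
          refine sup_le ?_ (sup_le ?_ ?_)
          · refine le_sup_of_le_left ?_
            rw [mul_left_comm, ← pow_succ']
          · have : I * (Ideal.span {b ^ (r + 1)} * I ^ (d - 1)) =
                Ideal.span {b ^ (r + 1)} * I ^ d := by
              have e : d = (d - 1) + 1 := by omega
              have e2 : I ^ d = I * I ^ (d - 1) := by
                conv_lhs => rw [e]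
                rw [pow_succ']
              rw [e2, mul_left_comm]
            rw [this]
            refine (Ideal.mul_mono_right hId').trans ?_
            have hb : Ideal.span {b ^ (r + 1)} ≤ I ^ (r + 1) := by
              rw [Ideal.span_singleton_le_iff_mem]; exact Ideal.pow_mem_pow hbI _
            rw [Ideal.mul_sup, Ideal.mul_sup]
            refine sup_le ?_ (sup_le ?_ ?_)
            · refine le_sup_of_le_left ?_
              rw [mul_comm]; exact Ideal.mul_mono_right hb
            · refine le_sup_of_le_right (le_sup_of_le_left ?_)
              rw [← mul_assoc, Ideal.span_singleton_mul_span_singleton, ← pow_succ b (r + 1)]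
            · refine le_sup_of_le_right (le_sup_of_le_right ?_)
              have e : d + (r + 1) = (r + 1) + d := by omega
              rw [mul_left_comm, e, pow_add I (r + 1) d]
              exact Ideal.mul_mono_right (Ideal.mul_mono_left hb)
          · refine le_sup_of_le_right (le_sup_of_le_right ?_)
            rw [mul_left_comm, ← pow_succ' I (d + r), add_assoc d r 1]
  refine ⟨p, hpI, d + (d + (n - t) - 1), by omega, (hr _).trans (sup_le ?_ (sup_le ?_ ?_))⟩
  · refine le_sup_of_le_left ?_
    simp
  · have e1 : d + (n - t) - 1 + 1 = d + (n - t) := by omega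
    rw [e1]
    refine (Ideal.mul_mono_left ((Ideal.span_singleton_le_iff_mem _).mpr hbp)).trans ?_
    rw [Ideal.sup_mul]
    refine sup_le_sup ?_ ?_
    · rw [mul_assoc, ← pow_add]
      have : n - t + (d - 1) = d + (d + (n - t) - 1) - d := by omega
      rw [this]
    · rw [mul_assoc, ← pow_add]
      have : d + (n - t) + (d - 1) = d + (d + (n - t) - 1) := by omega
      rw [this]
  · exact le_sup_right

/-- glue -/
theorem arf_glue {A : Type*} [CommRing A] [IsNoetherianRing A]
    (hsemi : {M : Ideal A | M.IsMaximal}.Finite) (I : Ideal A) (d : ℕ)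
    (h : ∀ M : Ideal A, M.IsMaximal →
      ∃ p ∈ I ^ d, ∃ N, d ≤ N ∧ I ^ N ≤ Ideal.span {p} * I ^ (N - d) ⊔ M * I ^ N) :
    ∃ p ∈ I ^ d, ∃ N, d ≤ N ∧ ∀ k, N ≤ k → I ^ k = Ideal.span {p} * I ^ (k - d) := by
  classical
  have : Finite {M : Ideal A | M.IsMaximal} := hsemi
  have := Fintype.ofFinite {M : Ideal A | M.IsMaximal}
  choose P hP using fun M : {M : Ideal A | M.IsMaximal} => h M.1 M.2
  choose hPI n hn hle using hP
  have hcop : Pairwise (Function.onFun IsCoprime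
      (fun M : {M : Ideal A | M.IsMaximal} => (M : Ideal A))) := by
    intro M M' hne
    exact @Ideal.isCoprime_of_isMaximal _ _ _ _ M.2 M'.2 (fun h => hne (Subtype.ext h))
  have he : ∀ M : {M : Ideal A | M.IsMaximal}, ∃ r : A,
      ∀ M' : {M : Ideal A | M.IsMaximal}, r - (if M' = M then 1 else 0) ∈ (M' : Ideal A) :=
    fun M => Ideal.exists_forall_sub_mem_ideal hcop _
  choose e he using he
  set p := ∑ M, e M * P M with hp
  have hpI : p ∈ I ^ d := Ideal.sum_mem _ fun M _ => Ideal.mul_mem_left _ _ (hPI M)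
  have hpd : ∀ M : {M : Ideal A | M.IsMaximal}, P M - p ∈ (M : Ideal A) * I ^ d := by
    intro M
    rw [hp, ← Finset.add_sum_erase _ _ (Finset.mem_univ M)]
    have : P M - (e M * P M + ∑ x ∈ Finset.univ.erase M, e x * P x) =
      -((e M - 1) * P M) - ∑ x ∈ Finset.univ.erase M, e x * P x := by ring
    rw [this]
    refine Ideal.sub_mem _ (neg_mem (Ideal.mul_mem_mul ?_ (hPI M))) (Ideal.sum_mem _ fun x hx =>
      Ideal.mul_mem_mul ?_ (hPI x))
    · simpa using he M M
    · have := he x M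
      rw [if_neg] at this
      · simpa using this
      · exact fun h => (Finset.mem_erase.mp hx).1 h.symm
  refine ⟨p, hpI, d + ∑ M, n M, by omega, fun k hk => le_antisymm ?_ ?_⟩
  swap
  · have e : k = d + (k - d) := by omega
    conv_rhs => rw [e, pow_add]
    exact Ideal.mul_mono_left ((Ideal.span_singleton_le_iff_mem _).mpr hpI)
  have hloc : ∀ M : Ideal A, M.IsMaximal → I ^ k ≤ Ideal.span {p} * I ^ (k - d) ⊔ M * I ^ k := by
    intro M hM
    have hk' : n ⟨M, hM⟩ ≤ k :=
      (Finset.single_le_sum (f := n) (fun _ _ => Nat.zero_le _) (Finset.mem_univ ⟨M, hM⟩)).trans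
        (by omega)
    have hd := hn ⟨M, hM⟩
    calc I ^ k = I ^ (n ⟨M, hM⟩) * I ^ (k - n ⟨M, hM⟩) := by rw [← pow_add]; congr 1; omega
      _ ≤ _ := Ideal.mul_mono_left (hle ⟨M, hM⟩)
      _ ≤ _ := by
        rw [Ideal.sup_mul, mul_assoc, mul_assoc, ← pow_add, ← pow_add]
        have e1 : n ⟨M, hM⟩ - d + (k - n ⟨M, hM⟩) = k - d := by omega
        have e2 : n ⟨M, hM⟩ + (k - n ⟨M, hM⟩) = k := by omega
        rw [e1, e2]
        refine sup_le ?_ le_sup_right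
        have : Ideal.span {P ⟨M, hM⟩} ≤ Ideal.span {p} ⊔ M * I ^ d := by
          rw [Ideal.span_singleton_le_iff_mem]
          have e : P ⟨M, hM⟩ = p + (P ⟨M, hM⟩ - p) := by ring
          rw [e]
          exact Ideal.add_mem _ (Ideal.mem_sup_left (Ideal.mem_span_singleton_self p))
            (Ideal.mem_sup_right (hpd ⟨M, hM⟩))
        refine (Ideal.mul_mono_left this).trans ?_
        rw [Ideal.sup_mul, mul_assoc, ← pow_add]
        have e3 : d + (k - d) = k := by omega
        rw [e3]
  -- Nakayama
  intro y hy
  set K := Ideal.span {p} * I ^ (k - d) with hK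
  by_contra hyK
  have hcol : (K.colon {y}) ≠ ⊤ := by
    intro h
    have : (1 : A) ∈ K.colon {y} := h ▸ Submodule.mem_top
    rw [Submodule.mem_colon_singleton] at this
    exact hyK (by simpa using this)
  obtain ⟨M, hM, hle⟩ := Ideal.exists_le_maximal _ hcol
  have hfg : (Submodule.map K.mkQ (I ^ k)).FG := Submodule.FG.map _ (IsNoetherian.noetherian _)
  have hin : Submodule.map K.mkQ (I ^ k) ≤ M • Submodule.map K.mkQ (I ^ k) := by
    rw [← Submodule.map_smul'']
    refine (Submodule.map_mono (hloc M hM)).trans ?_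
    rw [Submodule.map_sup]
    refine sup_le ?_ le_rfl
    rw [Submodule.map_le_iff_le_comap]
    refine le_trans ?_ (Submodule.comap_mono bot_le)
    rw [Submodule.comap_bot, Submodule.ker_mkQ]
  obtain ⟨r, hr1, hr2⟩ := Submodule.exists_sub_one_mem_and_smul_eq_zero_of_fg_of_le_smul M _ hfg hin
  have h1 := hr2 (K.mkQ y) (Submodule.mem_map_of_mem hy)
  rw [← map_smul, Submodule.mkQ_apply, Submodule.Quotient.mk_eq_zero] at h1
  have h2 : r ∈ M := hle (Submodule.mem_colon_singleton.mpr h1)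
  exact hM.ne_top ((Ideal.eq_top_iff_one _).mpr (by simpa using M.sub_mem h2 hr1))

noncomputable def arfLen {A Q : Type*} [CommRing A] [AddCommGroup Q] [Module A Q]
    (X Y : Submodule A Q) : ℕ∞ := Module.length A (Y ⧸ X.submoduleOf Y)

theorem arfLen_add {A Q : Type*} [CommRing A] [AddCommGroup Q] [Module A Q]
    {X Y Z : Submodule A Q} (h1 : X ≤ Y) (h2 : Y ≤ Z) :
    arfLen X Z = arfLen X Y + arfLen Y Z := by
  unfold arfLen
  refine Module.length_eq_add_of_exact
    (Submodule.mapQ (X.submoduleOf Y) (X.submoduleOf Z) (Submodule.inclusion h2) ?_)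
    (Submodule.mapQ (X.submoduleOf Z) (Y.submoduleOf Z) LinearMap.id ?_) ?_ ?_ ?_
  · intro x hx; exact hx
  · intro x hx; exact h1 hx
  · rw [← LinearMap.ker_eq_bot, Submodule.eq_bot_iff]
    intro x hx
    obtain ⟨x, rfl⟩ := Submodule.mkQ_surjective _ x
    have h3 := (Submodule.Quotient.mk_eq_zero (X.submoduleOf Z) (x := Submodule.inclusion h2 x)).mp hx
    exact (Submodule.Quotient.mk_eq_zero (X.submoduleOf Y)).mpr h3
  · intro x
    obtain ⟨x, rfl⟩ := Submodule.mkQ_surjective _ x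
    exact ⟨Submodule.Quotient.mk x, rfl⟩
  · intro x
    obtain ⟨x, rfl⟩ := Submodule.mkQ_surjective _ x
    constructor
    · intro h
      have h3 := (Submodule.Quotient.mk_eq_zero (Y.submoduleOf Z) (x := x)).mp h
      exact ⟨Submodule.Quotient.mk ⟨x, h3⟩, rfl⟩
    · rintro ⟨y, hy⟩
      obtain ⟨y, rfl⟩ := Submodule.mkQ_surjective _ y
      rw [← hy]
      exact (Submodule.Quotient.mk_eq_zero (Y.submoduleOf Z) (x := Submodule.inclusion h2 y)).mpr y.2

theorem arfLen_map {A Q : Type*} [CommRing A] [AddCommGroup Q] [Module A Q]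
    (φ : Q →ₗ[A] Q) (hφ : Function.Injective φ) (X Y : Submodule A Q) :
    arfLen (X.map φ) (Y.map φ) = arfLen X Y := by
  unfold arfLen
  symm
  refine LinearEquiv.length_eq (Submodule.Quotient.equiv _ _
    (Submodule.equivMapOfInjective φ hφ Y) ?_)
  ext ⟨z, hz⟩
  simp only [Submodule.mem_map, Submodule.submoduleOf, Submodule.mem_comap]
  constructor
  · rintro ⟨y, hy, h⟩
    refine ⟨y, hy, ?_⟩
    have := congrArg Subtype.val h
    simpa using this
  · rintro ⟨x, hx, h⟩
    obtain ⟨y, hy, h'⟩ := hz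
    have : x = y := hφ (h.trans h'.symm)
    subst this
    exact ⟨⟨x, hy⟩, hx, Subtype.ext h⟩

theorem arfLen_inf {A Q : Type*} [CommRing A] [AddCommGroup Q] [Module A Q]
    (X Y : Submodule A Q) :
    arfLen (X ⊓ Y) X = arfLen Y (X ⊔ Y) := by
  unfold arfLen
  have := (LinearMap.quotientInfEquivSupQuotient X Y).length_eq
  exact this

theorem arf_length_ne_top {A V : Type*} [CommRing A] [AddCommGroup V] [Module A V]
    [Module.Finite A V] (s : A) (hs : ∀ v : V, s • v = 0) [IsArtinianRing (A ⧸ Ideal.span {s})] :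
    Module.length A V ≠ ⊤ := by
  have ht : Module.IsTorsionBySet A V (Ideal.span {s} : Ideal A) := by
    rintro v ⟨x, hx⟩
    obtain ⟨y, rfl⟩ := Ideal.mem_span_singleton'.mp hx
    simp [mul_smul, hs]
  let _ := ht.module
  have : IsScalarTower A (A ⧸ Ideal.span {s}) V := ht.isScalarTower
  have : Module.Finite (A ⧸ Ideal.span {s}) V := Module.Finite.of_restrictScalars_finite A _ _
  rw [Module.length_eq_of_surjective (R := A ⧸ Ideal.span {s}) Ideal.Quotient.mk_surjective]
  exact Module.length_ne_top

theorem arfLen_ne_top {A Q : Type*} [CommRing A] [AddCommGroup Q] [Module A Q]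
    (X Y : Submodule A Q) (hY : Y.FG) (s : A) (hs : ∀ y ∈ Y, s • y ∈ X)
    [IsArtinianRing (A ⧸ Ideal.span {s})] : arfLen X Y ≠ ⊤ := by
  have : Module.Finite A Y := Module.Finite.iff_fg.mpr hY
  refine arf_length_ne_top s fun v => ?_
  obtain ⟨y, rfl⟩ := Submodule.mkQ_surjective _ v
  rw [← map_smul, Submodule.mkQ_apply, Submodule.Quotient.mk_eq_zero]
  exact hs y y.2

theorem arf_fiber {A : Type*} [CommRing A] [IsNoetherianRing A] (a b : A)
    (ha : a ∈ nonZeroDivisors A) (hart : ∀ s ∈ nonZeroDivisors A, IsArtinianRing (A ⧸ Ideal.span {s}))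
    (I M : Ideal A) [hM : M.IsMaximal] (hI : I = Ideal.span {a} ⊔ Ideal.span {b}) :
    ∃ (n : ℕ) (g : ℕ → A) (i0 : ℕ), i0 ≤ n ∧ g i0 ∉ M ∧
      ∑ i ∈ Finset.range (n + 1), g i * (a ^ i * b ^ (n - i)) ∈ M * I ^ n := by
  classical
  have haI : a ∈ I := hI ▸ Ideal.mem_sup_left (Ideal.mem_span_singleton_self a)
  have hbI : b ∈ I := hI ▸ Ideal.mem_sup_right (Ideal.mem_span_singleton_self b)
  by_cases haM : a ∈ M
  swap
  · refine ⟨1, fun i => if i = 0 then -a else b, 0, by simp, by simpa using haM, ?_⟩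
    simp [Finset.sum_range_succ]
    ring_nf
    simp
  have hmon : ∀ i j k, i + j = k → a ^ i * b ^ j ∈ I ^ k := by
    rintro i j k rfl
    rw [pow_add]
    exact Ideal.mul_mem_mul (Ideal.pow_mem_pow haI i) (Ideal.pow_mem_pow hbI j)
  have := hart a ha
  set φ : A →ₗ[A] A := LinearMap.mulLeft A a with hφ
  have hinj : Function.Injective φ := by
    intro x y h
    exact (mul_cancel_left_mem_nonZeroDivisors ha).mp (by simpa [hφ] using h)
  have hfin : arfLen (Submodule.map φ ⊤) (⊤ : Submodule A A) ≠ ⊤ :=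
    arfLen_ne_top _ _ (IsNoetherian.noetherian _) a (fun y _ => ⟨y, trivial, by simp [hφ]⟩)
  obtain ⟨e, he⟩ := ENat.ne_top_iff_exists.mp hfin
  set J := I ^ e with hJ
  have hJfin : arfLen J ⊤ ≠ ⊤ := by
    have := hart (a ^ e) (pow_mem ha e)
    refine arfLen_ne_top _ _ (IsNoetherian.noetherian _) (a ^ e) (fun y _ => ?_)
    exact Ideal.mul_mem_right _ _ (Ideal.pow_mem_pow haI e)
  have hlenJ : arfLen (Submodule.map φ J) J = e := by
    have h1 := arfLen_add (X := Submodule.map φ J) (Y := J) (Z := ⊤) (by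
      rintro _ ⟨x, hx, rfl⟩; exact Ideal.mul_mem_left _ _ hx) le_top
    have h2 := arfLen_add (X := Submodule.map φ J) (Y := Submodule.map φ ⊤) (Z := ⊤)
      (Submodule.map_mono le_top) le_top
    rw [arfLen_map φ hinj, ← he, h1, add_comm] at h2
    exact ENat.add_right_injective_of_ne_top hJfin h2
  let k := A ⧸ M
  let _ : Field k := Ideal.Quotient.field M
  let V := J ⧸ (M • ⊤ : Submodule A J)
  have hlenV : Module.length A V ≤ e := by
    rw [← hlenJ]
    refine Module.length_le_of_surjective (Submodule.mapQ ((Submodule.map φ J).submoduleOf J)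
      (M • ⊤ : Submodule A J) LinearMap.id ?_) ?_
    · rintro ⟨x, hx⟩ hx'
      obtain ⟨y, hy, h⟩ := hx'
      have : (⟨x, hx⟩ : J) = a • (⟨y, hy⟩ : J) := Subtype.ext (by simpa [hφ] using h.symm)
      simp only [Submodule.comap_id]
      rw [this]
      exact Submodule.smul_mem_smul haM trivial
    · intro x
      obtain ⟨x, rfl⟩ := Submodule.mkQ_surjective _ x
      exact ⟨Submodule.Quotient.mk x, rfl⟩
  have hfr : (Module.finrank k V : ℕ∞) ≤ e := by
    rw [← Module.length_eq_finrank,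
      ← Module.length_eq_of_surjective (S := A) (R := k) Ideal.Quotient.mk_surjective]
    exact hlenV
  let m : Fin (e + 1) → V := fun i => Submodule.Quotient.mk
    ⟨a ^ (i : ℕ) * b ^ (e - (i : ℕ)), hmon _ _ _ (by omega)⟩
  have hdep : ¬ LinearIndependent k m := by
    intro h
    have := h.fintype_card_le_finrank
    simp at this hfr
    omega
  rw [Fintype.not_linearIndependent_iff] at hdep
  obtain ⟨g, hg, i0, hi0⟩ := hdep
  choose G hG using fun i => Ideal.Quotient.mk_surjective (g i)
  refine ⟨e, fun i => if h : i < e + 1 then G ⟨i, h⟩ else 0, i0, by omega, ?_, ?_⟩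
  · simp only [i0.2, dif_pos, Fin.eta]
    intro h
    exact hi0 (by rw [← hG, Ideal.Quotient.eq_zero_iff_mem.mpr h])
  · rw [Finset.sum_range]
    simp only [Fin.is_lt, dif_pos, Fin.eta]
    have h1 : ∑ i, G i • m i = 0 := by
      rw [← hg]
      refine Finset.sum_congr rfl fun i _ => ?_
      rw [← hG i]
      rfl
    have h2 : (Submodule.Quotient.mk (∑ i : Fin (e + 1), G i •
        (⟨a ^ (i : ℕ) * b ^ (e - (i : ℕ)), hmon _ _ _ (by omega)⟩ : J)) : V) = 0 := by
      rw [← h1, ← Submodule.mkQ_apply, map_sum]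
      rfl
    rw [Submodule.Quotient.mk_eq_zero] at h2
    have h3 := Submodule.mem_map_of_mem (f := J.subtype) h2
    rw [Submodule.map_smul''] at h3
    simpa using h3

theorem arf_artin (A : Type*) [CommRing A] [IsNoetherianRing A]
    (hdim : ∀ (M : Ideal A) [M.IsMaximal], ringKrullDim (Localization.AtPrime M) = 1)
    (s : A) (hs : s ∈ nonZeroDivisors A) : IsArtinianRing (A ⧸ Ideal.span {s}) := by
  rw [isArtinianRing_iff_isNoetherianRing_krullDimLE_zero]
  refine ⟨inferInstance, Ring.krullDimLE_zero_iff.mpr fun P' hP' => ?_⟩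
  set P := P'.comap (Ideal.Quotient.mk (Ideal.span {s})) with hP
  have hPp : P.IsPrime := inferInstance
  have hsP : s ∈ P := by
    rw [hP, Ideal.mem_comap, Ideal.Quotient.eq_zero_iff_mem.mpr (Ideal.mem_span_singleton_self s)]
    exact zero_mem _
  obtain ⟨M, hM, hPM⟩ := Ideal.exists_le_maximal P hPp.ne_top
  have hMp : M.IsPrime := hM.isPrime
  have hEq : P = M := by
    by_contra hne
    obtain ⟨P0, hP0, hle⟩ := Ideal.exists_minimalPrimes_le (I := ⊥) (J := P) bot_le
    have hP0p : P0.IsPrime := hP0.1.1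
    have hlt : P0 < P := lt_of_le_of_ne hle (by
      rintro rfl
      exact Set.disjoint_left.mp (Ideal.disjoint_nonZeroDivisors_of_mem_minimalPrimes hP0) hsP hs)
    have hlt2 : P < M := lt_of_le_of_ne hPM hne
    have e1 := Ideal.height_add_one_le_of_lt_of_isPrime hlt
    have e2 := Ideal.height_add_one_le_of_lt_of_isPrime hlt2
    have e3 := hdim M
    rw [IsLocalization.AtPrime.ringKrullDim_eq_height M] at e3
    have e4 : M.height = 1 := by exact_mod_cast e3
    rw [e4] at e2
    have e5 : (1 : ℕ∞) ≤ P.height := le_trans (by simp) e1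
    have e6 : (1 : ℕ∞) + 1 ≤ 1 := le_trans (by gcongr) e2
    exact absurd e6 (by decide)
  have : P.IsMaximal := hEq ▸ hM
  have hm := Ideal.map_eq_top_or_isMaximal_of_surjective (Ideal.Quotient.mk (Ideal.span {s}))
    Ideal.Quotient.mk_surjective this
  rw [hP, Ideal.map_comap_of_surjective _ Ideal.Quotient.mk_surjective] at hm
  exact hm.resolve_left hP'.ne_top

theorem arf_mem_ic {A : Type*} [CommRing A] (I : Ideal A) (p : Polynomial A) (hp : p.Monic)
    (hc : ∀ k, p.coeff k ∈ I ^ (p.natDegree - k)) (x : A) (hx : p.eval x = 0) :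
    MemIdealIntegralClosure I x := by
  rcases Nat.eq_zero_or_pos p.natDegree with h0 | hpos
  · have h1 : p = 1 := hp.natDegree_eq_zero.mp h0
    rw [h1, Polynomial.eval_one] at hx
    have : Subsingleton A := subsingleton_of_zero_eq_one hx.symm
    exact ⟨1, one_pos, fun _ => 0, by simp, Subsingleton.elim _ _⟩
  · refine ⟨p.natDegree, hpos, fun i => p.coeff (p.natDegree - i), ?_, ?_⟩
    · intro i hi
      rw [Finset.mem_Icc] at hi
      have := hc (p.natDegree - i)
      rwa [show p.natDegree - (p.natDegree - i) = i by omega] at this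
    · rw [← hx, Polynomial.eval_eq_sum_range, ← Finset.sum_range_reflect, Finset.sum_range_succ']
      simp only [add_tsub_cancel_right, Nat.sub_zero, Polynomial.Monic.coeff_natDegree hp, one_mul]
      rw [add_comm]
      congr 1
      rw [Finset.range_eq_Ico, Finset.sum_Ico_add' (fun j => p.coeff (p.natDegree - j) *
        x ^ (p.natDegree - j)) 0 p.natDegree 1]
      refine Finset.sum_congr ?_ fun i hi => by simp
      ext i; simp

theorem arf_isUnit_regular {A : Type*} (Q : Type*) [CommRing A] [CommRing Q] [Algebra A Q] [IsFractionRing A Q] (c : A)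
    (h : IsUnit (algebraMap A Q c)) : c ∈ nonZeroDivisors A := by
  rw [mem_nonZeroDivisors_iff_right]
  intro x hx
  apply IsFractionRing.injective A Q
  rw [map_zero]
  refine h.mul_left_injective ?_
  simp only [zero_mul]
  rw [← map_mul, hx, map_zero]

theorem arf_regular_isUnit {A : Type*} (Q : Type*) [CommRing A] [CommRing Q] [Algebra A Q] [IsFractionRing A Q] (c : A)
    (h : c ∈ nonZeroDivisors A) : IsUnit (algebraMap A Q c) :=
  IsLocalization.map_units Q (⟨c, h⟩ : nonZeroDivisors A)

set_option maxHeartbeats 1000000 in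
theorem arf_two {A Q O : Type*} [CommRing A] [IsNoetherianRing A] [CommRing Q]
    [Algebra A Q] [IsFractionRing A Q] [CommRing O] [Algebra A O] [Algebra O Q]
    [IsScalarTower A O Q] [IsIntegralClosure O A Q]
    (hsemi : {M : Ideal A | M.IsMaximal}.Finite)
    (hart : ∀ s ∈ nonZeroDivisors A, IsArtinianRing (A ⧸ Ideal.span {s}))
    (hsc : ∀ x : O, x ⊗ₜ[A] (1 : O) = (1 : O) ⊗ₜ[A] x → ∃ a : A, algebraMap A O a = x) (a b : A) (ha : a ∈ nonZeroDivisors A) :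
    ∃ c : A, c ∈ nonZeroDivisors A ∧
      MemIdealIntegralClosure (Ideal.span {a} ⊔ Ideal.span {b}) c ∧
      ∃ α β : Q, IsIntegral A α ∧ IsIntegral A β ∧
        algebraMap A Q a = algebraMap A Q c * α ∧
        algebraMap A Q b = algebraMap A Q c * β := by
  classical
  obtain ⟨I, hI⟩ : ∃ I, I = Ideal.span {a} ⊔ Ideal.span {b} := ⟨_, rfl⟩
  rw [← hI]
  have haI : a ∈ I := hI ▸ Ideal.mem_sup_left (Ideal.mem_span_singleton_self a)
  have hbI : b ∈ I := hI ▸ Ideal.mem_sup_right (Ideal.mem_span_singleton_self b)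
  -- uniform degree
  obtain ⟨d, hd⟩ : ∃ d : ℕ, ∀ d', d ≤ d' → ∀ M : Ideal A, M.IsMaximal →
      ∃ p ∈ I ^ d', ∃ N, d' ≤ N ∧ I ^ N ≤ Ideal.span {p} * I ^ (N - d') ⊔ M * I ^ N := by
    have h1 : ∀ M : Ideal A, ∃ n : ℕ, M.IsMaximal → ∀ d', n < d' →
      ∃ p ∈ I ^ d', ∃ N, d' ≤ N ∧ I ^ N ≤ Ideal.span {p} * I ^ (N - d') ⊔ M * I ^ N := by
      intro M
      by_cases hM : M.IsMaximal
      · obtain ⟨n, g, i0, hi0, hg, hG⟩ := arf_fiber a b ha hart I M hI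
        exact ⟨n, fun _ d' hd' => arf_local_power a b I M hI n g i0 hi0 hg hG d' hd'⟩
      · exact ⟨0, fun h => absurd h hM⟩
    choose f hf using h1
    refine ⟨hsemi.toFinset.sup f + 1, fun d' hd' M hM => hf M hM d' ?_⟩
    have : f M ≤ hsemi.toFinset.sup f := Finset.le_sup (by simpa using hM)
    omega
  obtain ⟨p, hpI, N1, hdN1, hp⟩ := arf_glue hsemi I d (hd d le_rfl)
  obtain ⟨q, hqI, N2, hdN2, hq⟩ := arf_glue hsemi I (d + 1) (hd (d + 1) (by omega))
  clear hd
  obtain ⟨n, hn1, hn2⟩ : ∃ n, N1 ≤ n ∧ N2 ≤ n := ⟨max N1 N2, le_max_left _ _, le_max_right _ _⟩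
  have hP : ∀ m, n ≤ m → I ^ (m + d) = Ideal.span {p} * I ^ m := fun m hm => by
    have := hp (m + d) (by omega)
    rwa [Nat.add_sub_cancel] at this
  have hQ : ∀ m, n ≤ m → I ^ (m + (d + 1)) = Ideal.span {q} * I ^ m := fun m hm => by
    have := hq (m + (d + 1)) (by omega)
    rwa [Nat.add_sub_cancel] at this
  clear hp hq
  let ι := algebraMap A Q
  have hιinj : Function.Injective ι := IsFractionRing.injective A Q
  have hau : IsUnit (ι a) := arf_regular_isUnit Q a ha
  have hunit : ∀ (r : A) (k : ℕ) , a ^ k ∈ Ideal.span {r} → IsUnit (ι r) := by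
    intro r k h
    obtain ⟨t, ht⟩ := Ideal.mem_span_singleton'.mp h
    have : IsUnit (ι t * ι r) := by rw [← map_mul, ht, map_pow]; exact hau.pow k
    exact isUnit_of_mul_isUnit_right this
  have hpu : IsUnit (ι p) := hunit p (n + d)
    (by
    have h := Ideal.pow_mem_pow haI (n + d)
    rw [hP n le_rfl] at h
    exact Ideal.mul_le_left h)
  have hqu : IsUnit (ι q) := hunit q (n + (d + 1))
    (by
    have h := Ideal.pow_mem_pow haI (n + (d + 1))
    rw [hQ n le_rfl] at h
    exact Ideal.mul_le_left h)
  obtain ⟨pi, hpi⟩ := hpu.exists_right_inv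
  obtain ⟨qi, hqi⟩ := hqu.exists_right_inv
  obtain ⟨c, hc⟩ : ∃ c, c = ι q * pi := ⟨_, rfl⟩
  obtain ⟨ci, hci⟩ : ∃ ci, ci = ι p * qi := ⟨_, rfl⟩
  have hcci : c * ci = 1 := by
    rw [hc, hci]; linear_combination ι q * qi * hpi + hqi
  have hcp : c * ι p = ι q := by rw [hc]; linear_combination ι q * hpi
  let T : ℕ → Submodule A Q := fun k => Submodule.map (Algebra.linearMap A Q) (I ^ k)
  have memT : ∀ k x, x ∈ I ^ k → ι x ∈ T k := fun k x hx => ⟨x, hx, rfl⟩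
  have F1 : ∀ m, n ≤ m → ∀ t ∈ T m, c * t ∈ T (m + 1) := by
    rintro m hm _ ⟨x, hx, rfl⟩
    have h1 : q * x ∈ I ^ (m + 1 + d) := by
      rw [add_assoc, add_comm 1 d, hQ m hm]
      exact Ideal.mul_mem_mul (Ideal.mem_span_singleton_self q) hx
    rw [hP (m + 1) (by omega)] at h1
    obtain ⟨y, hy, h2⟩ := Ideal.mem_span_singleton_mul.mp h1
    have h3 : ι p * ι y = ι q * ι x := by rw [← map_mul, ← map_mul, h2]
    have : c * ι x = ι y := by rw [hc]; linear_combination (-pi) * h3 + ι y * hpi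
    change c * ι x ∈ _
    rw [this]; exact memT _ _ hy
  have F2 : ∀ m, n ≤ m → ∀ t ∈ T (m + 1), ci * t ∈ T m := by
    rintro m hm _ ⟨y, hy, rfl⟩
    have h1 : p * y ∈ I ^ (m + (d + 1)) := by
      rw [add_comm d 1, ← add_assoc, hP (m + 1) (by omega)]
      exact Ideal.mul_mem_mul (Ideal.mem_span_singleton_self p) hy
    rw [hQ m (by omega)] at h1
    obtain ⟨x, hx, h2⟩ := Ideal.mem_span_singleton_mul.mp h1
    have h3 : ι q * ι x = ι p * ι y := by rw [← map_mul, ← map_mul, h2]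
    have : ci * ι y = ι x := by rw [hci]; linear_combination (-qi) * h3 + ι x * hqi
    change ci * ι y ∈ _
    rw [this]; exact memT _ _ hx
  have F1' : ∀ j m, n ≤ m → ∀ t ∈ T m, c ^ j * t ∈ T (m + j) := by
    intro j
    induction j with
    | zero => intro m hm t ht; simpa using ht
    | succ j ih =>
      intro m hm t ht
      have := F1 (m + j) (by omega) _ (ih m hm t ht)
      rwa [← mul_assoc, ← pow_succ'] at this
  have F2' : ∀ j m, n ≤ m → ∀ t ∈ T (m + j), ci ^ j * t ∈ T m := by
    intro j
    induction j with
    | zero => intro m hm t ht; simpa using ht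
    | succ j ih =>
      intro m hm t ht
      have := ih m hm _ (F2 (m + j) (by omega) t ht)
      rwa [← mul_assoc, ← pow_succ] at this
  have hTfg : (T n).FG := Submodule.FG.map _ (IsNoetherian.noetherian _)
  have haT : ι (a ^ n) ∈ T n := memT _ _ (Ideal.pow_mem_pow haI n)
  have haun : IsUnit (ι (a ^ n)) := by rw [map_pow]; exact hau.pow n
  have hint := arf_integral (T n) hTfg _ haun haT
  have hmono : T (n + 1) ≤ T n := Submodule.map_mono (Ideal.pow_le_pow_right (by omega))
  have hcO : IsIntegral A c := hint c fun t ht => hmono (F1 n le_rfl t ht)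
  have hmulI : ∀ x ∈ I, ∀ t ∈ T n, ι x * t ∈ T (n + 1) := by
    rintro x hx _ ⟨y, hy, rfl⟩
    change ι x * ι y ∈ _
    rw [← map_mul]
    apply memT
    rw [pow_succ']
    exact Ideal.mul_mem_mul hx hy
  have hαO : ∀ x ∈ I, IsIntegral A (ci * ι x) := fun x hx => hint _ fun t ht => by
    rw [mul_assoc]; exact F2 n le_rfl _ (hmulI x hx t ht)
  have huO : IsIntegral A (ci ^ d * ι p) := hint _ fun t ht => by
    rw [mul_assoc]
    refine F2' d n le_rfl _ ?_
    obtain ⟨y, hy, rfl⟩ := ht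
    change ι p * ι y ∈ _
    rw [← map_mul]
    apply memT
    rw [hP n le_rfl]
    exact Ideal.mul_mem_mul (Ideal.mem_span_singleton_self p) hy
  have hviO : IsIntegral A (pi * c ^ d) := hint _ fun t ht => by
    rw [mul_assoc]
    obtain ⟨y, hy, h⟩ := F1' d n le_rfl _ ht
    rw [← h]
    rw [SetLike.mem_coe, hP n le_rfl] at hy
    obtain ⟨x, hx, rfl⟩ := Ideal.mem_span_singleton_mul.mp hy
    have : pi * ι (p * x) = ι x := by rw [map_mul]; linear_combination ι x * hpi
    change pi * ι (p * x) ∈ _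
    rw [this]; exact memT _ _ hx
  have hcicd : ∀ k, c ^ k * ci ^ k = 1 := fun k => by rw [← mul_pow, hcci, one_pow]
  have hinjO : Function.Injective (algebraMap O Q) := IsIntegralClosure.algebraMap_injective O A Q
  have hex : ∀ x : Q, IsIntegral A x → ∃ y : O, algebraMap O Q y = x := fun x hx =>
    ⟨IsIntegralClosure.mk' O x hx, IsIntegralClosure.algebraMap_mk' O x hx⟩
  have hAO : ∀ x : A, algebraMap O Q (algebraMap A O x) = ι x := fun x =>
    (IsScalarTower.algebraMap_apply A O Q x).symm
  obtain ⟨c', hc'⟩ := hex c hcO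
  obtain ⟨al, hal⟩ := hex _ (hαO a haI)
  obtain ⟨be, hbe⟩ := hex _ (hαO b hbI)
  obtain ⟨u, hu⟩ := hex _ huO
  obtain ⟨ui, hui⟩ := hex _ hviO
  have huu : IsUnit u := by
    refine IsUnit.of_mul_eq_one ui (hinjO ?_)
    rw [map_mul, hu, hui, map_one]
    linear_combination c ^ d * ci ^ d * hpi + hcicd d
  let J : Submodule A O := Submodule.span A {al, be}
  have hJ1 : ∀ x ∈ I, ∃ v ∈ J, ι x = c * algebraMap O Q v := by
    intro x hx
    rw [hI] at hx
    obtain ⟨y, hy, z, hz, rfl⟩ := Submodule.mem_sup.mp hx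
    obtain ⟨r, rfl⟩ := Ideal.mem_span_singleton'.mp hy
    obtain ⟨s, rfl⟩ := Ideal.mem_span_singleton'.mp hz
    refine ⟨r • al + s • be, Submodule.mem_span_pair.mpr ⟨r, s, rfl⟩, ?_⟩
    rw [Algebra.smul_def, Algebra.smul_def, map_add, map_mul, map_mul, map_add, map_mul, map_mul,
      hAO, hAO, hal, hbe]
    linear_combination -(ι r * ι a + ι s * ι b) * hcci
  have hJk : ∀ k, ∀ x ∈ I ^ k, ∃ v ∈ J ^ k, ι x = c ^ k * algebraMap O Q v := by
    intro k
    induction k with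
    | zero =>
      intro x _
      refine ⟨algebraMap A O x, ?_, ?_⟩
      · rw [pow_zero]; exact Submodule.mem_one.mpr ⟨x, rfl⟩
      · rw [pow_zero, one_mul, hAO]
    | succ k ih =>
      intro x hx
      rw [pow_succ] at hx
      refine Submodule.mul_induction_on hx ?_ ?_
      · intro y hy z hz
        obtain ⟨v, hv, h1⟩ := ih y hy
        obtain ⟨w, hw, h2⟩ := hJ1 z hz
        refine ⟨v * w, ?_, ?_⟩
        · rw [pow_succ]; exact Submodule.mul_mem_mul hv hw
        · rw [map_mul, h1, h2, map_mul]; ring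
      · rintro y z ⟨v, hv, h1⟩ ⟨w, hw, h2⟩
        refine ⟨v + w, add_mem hv hw, ?_⟩
        rw [map_add, h1, h2, map_add]; ring
  have hu1 : u ∈ J ^ d := by
    obtain ⟨v, hv, h⟩ := hJk d p hpI
    have : u = v := hinjO (by
      rw [hu]
      linear_combination ci ^ d * h + algebraMap O Q v * hcicd d)
    rwa [this]
  have hu2 : u ∈ J ^ (d + 1) := by
    obtain ⟨v, hv, h⟩ := hJk (d + 1) q hqI
    have : u = v := hinjO (by
      rw [hu]
      linear_combination ci ^ (d + 1) * h + algebraMap O Q v * hcicd (d + 1) + ci ^ (d + 1) * hcp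
        - ci ^ d * ι p * hcci)
    rwa [this]
  have htens := arf_tensor c' J (by
    intro j hj
    obtain ⟨r, s, rfl⟩ := Submodule.mem_span_pair.mp hj
    refine ⟨r * a + s * b, hinjO ?_⟩
    rw [hAO, Algebra.smul_def, Algebra.smul_def]
    simp only [map_add, map_mul, hAO, hal, hbe, hc']
    change ι r * ι a + ι s * ι b = _
    linear_combination -(ι r * ι a + ι s * ι b) * hcci) d u huu hu1 hu2
  obtain ⟨c0, hc0⟩ := hsc c' htens
  have hc0' : ι c0 = c := by rw [← hAO, hc0, hc']
  refine ⟨c0, arf_isUnit_regular Q c0 ?_, ?_, ci * ι a, ci * ι b, hαO a haI, hαO b hbI, ?_, ?_⟩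
  · rw [hc0']; exact IsUnit.of_mul_eq_one _ hcci
  · obtain ⟨P, hPm, hPc, hP0⟩ := arf_charpoly (T n) hTfg _ haun haT I c (by
      intro t ht
      have := F1 n le_rfl t ht
      have e : T (n + 1) = I • T n := by
        change Submodule.map _ (I ^ (n + 1)) = I • Submodule.map _ (I ^ n)
        rw [← Submodule.map_smul'', pow_succ']
        rfl
      rwa [e] at this)
    refine arf_mem_ic I P hPm hPc c0 (hιinj ?_)
    rw [map_zero, ← hP0, ← hc0', ← Polynomial.aeval_algebraMap_apply_eq_algebraMap_eval]
  · rw [hc0']; linear_combination -(ι a) * hcci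
  · rw [hc0']; linear_combination -(ι b) * hcci

theorem arf_ic_mono {A : Type*} [CommRing A] {I J : Ideal A} (h : I ≤ J) {x : A}
    (hx : MemIdealIntegralClosure I x) : MemIdealIntegralClosure J x := by
  obtain ⟨n, hn, c, hc, e⟩ := hx
  exact ⟨n, hn, c, fun i hi => Ideal.pow_right_mono h i (hc i hi), e⟩

set_option maxHeartbeats 1000000 in
theorem arf_reduction {A Q O : Type*} [CommRing A] [IsNoetherianRing A] [CommRing Q]
    [Algebra A Q] [IsFractionRing A Q] [CommRing O] [Algebra A O] [Algebra O Q]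
    [IsScalarTower A O Q] [IsIntegralClosure O A Q]
    (hsemi : {M : Ideal A | M.IsMaximal}.Finite)
    (hart : ∀ s ∈ nonZeroDivisors A, IsArtinianRing (A ⧸ Ideal.span {s}))
    (hsc : ∀ x : O, x ⊗ₜ[A] (1 : O) = (1 : O) ⊗ₜ[A] x → ∃ a : A, algebraMap A O a = x)
    (I : Ideal A) (hI : ∀ a, MemIdealIntegralClosure I a → a ∈ I) (x : A) (hxI : x ∈ I)
    (hx : x ∈ nonZeroDivisors A) :
    ∃ (n : ℕ) (a : A), a ∈ I ∧ I ^ (n + 1) = Ideal.span {a} * I ^ n := by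
  classical
  let ι := algebraMap A Q
  have hιinj : Function.Injective ι := IsFractionRing.injective A Q
  have key : ∀ S : Finset A, (∀ y ∈ S, y ∈ I) → ∃ c ∈ I, c ∈ nonZeroDivisors A ∧
      ∀ y ∈ S, ∃ t : Q, IsIntegral A t ∧ ι y = ι c * t := by
    intro S
    induction S using Finset.induction_on with
    | empty => intro _; exact ⟨x, hxI, hx, by simp⟩
    | insert b S hb ih =>
      intro hS
      obtain ⟨c, hcI, hc, h⟩ := ih fun y hy => hS y (Finset.mem_insert_of_mem hy)
      obtain ⟨c', hc', hic, α, β, hα, hβ, e1, e2⟩ := arf_two (Q := Q) hsemi hart hsc c b hc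
      refine ⟨c', hI _ (arf_ic_mono ?_ hic), hc', ?_⟩
      · rw [sup_le_iff, Ideal.span_singleton_le_iff_mem, Ideal.span_singleton_le_iff_mem]
        exact ⟨hcI, hS b (Finset.mem_insert_self _ _)⟩
      · intro y hy
        rcases Finset.mem_insert.mp hy with rfl | hy
        · exact ⟨β, hβ, e2⟩
        · obtain ⟨t, ht, e⟩ := h y hy
          refine ⟨α * t, hα.mul ht, ?_⟩
          rw [e]
          change algebraMap A Q c * t = _
          rw [e1, mul_assoc]
  obtain ⟨S, hS⟩ := (IsNoetherian.noetherian I : I.FG)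
  obtain ⟨c, hcI, hc, hcS⟩ := key S fun y hy => hS ▸ Ideal.subset_span hy
  obtain ⟨ci, hci⟩ := (arf_regular_isUnit Q c hc).exists_right_inv
  change ι c * ci = 1 at hci
  let ψ : A →ₗ[A] Q := (LinearMap.mulLeft A ci).comp (Algebra.linearMap A Q)
  have hψ : ∀ y, ψ y = ci * ι y := fun y => rfl
  let J : Submodule A Q := Submodule.map ψ I
  have hJspan : J = Submodule.span A ((S.image ψ : Finset Q) : Set Q) := by
    change Submodule.map ψ I = _
    rw [← hS, Submodule.map_span, Finset.coe_image]
  have h1J : (1 : Submodule A Q) ≤ J := by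
    rw [Submodule.one_le]
    exact ⟨c, hcI, by rw [hψ, mul_comm, hci]⟩
  have hadj : (Subalgebra.toSubmodule (Algebra.adjoin A ((S.image ψ : Finset Q) : Set Q))).FG := by
    refine fg_adjoin_of_finite (Finset.finite_toSet _) ?_
    intro z hz
    rw [Finset.mem_coe, Finset.mem_image] at hz
    obtain ⟨y, hy, rfl⟩ := hz
    obtain ⟨t, ht, e⟩ := hcS y hy
    rw [hψ, e, ← mul_assoc, mul_comm ci, hci, one_mul]
    exact ht
  have hJle : ∀ n, J ^ n ≤ Subalgebra.toSubmodule (Algebra.adjoin A ((S.image ψ : Finset Q) : Set Q)) := by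
    have h1 : J ≤ Subalgebra.toSubmodule (Algebra.adjoin A ((S.image ψ : Finset Q) : Set Q)) := by
      rw [hJspan, Submodule.span_le]
      exact Algebra.subset_adjoin
    intro n
    induction n with
    | zero =>
      rw [pow_zero, Submodule.one_le]
      exact one_mem (Algebra.adjoin A ((S.image ψ : Finset Q) : Set Q))
    | succ n ih =>
      rw [pow_succ, Submodule.mul_le]
      intro y hy z hz
      exact mul_mem (S := Subalgebra A Q) (ih hy) (h1 hz)
  have hmono : Monotone fun n => J ^ n := by
    refine monotone_nat_of_le_succ fun n => ?_
    rw [pow_succ]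
    exact le_mul_of_one_le_right' h1J
  have hnoeth := isNoetherian_of_fg_of_noetherian _ hadj
  obtain ⟨n, hn⟩ := (isNoetherian_submodule.mp hnoeth (⨆ n, J ^ n) (iSup_le hJle)).stabilizes_of_iSup_eq
    ⟨_, hmono⟩ rfl
  have hn' : J ^ (n + 1) ≤ J ^ n := (le_iSup (fun n => J ^ n) (n + 1)).trans hn.le
  have up : ∀ k, ∀ y ∈ I ^ k, ci ^ k * ι y ∈ J ^ k := by
    intro k
    induction k with
    | zero => intro y _; rw [pow_zero, pow_zero, one_mul]; exact Submodule.mem_one.mpr ⟨y, rfl⟩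
    | succ k ih =>
      intro y hy
      rw [pow_succ] at hy
      refine Submodule.mul_induction_on hy ?_ ?_
      · intro u hu v hv
        have := Submodule.mul_mem_mul (ih u hu) (show ψ v ∈ J from ⟨v, hv, rfl⟩)
        rw [← pow_succ] at this
        convert this using 1
        rw [hψ, map_mul]; ring
      · intro u v hu hv
        rw [map_add, mul_add]; exact add_mem hu hv
  have dn : ∀ k, ∀ v ∈ J ^ k, ∃ z ∈ I ^ k, v = ci ^ k * ι z := by
    intro k
    induction k with
    | zero =>
      intro v hv
      rw [pow_zero] at hv
      obtain ⟨z, rfl⟩ := Submodule.mem_one.mp hv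
      exact ⟨z, by simp, by rw [pow_zero, one_mul]⟩
    | succ k ih =>
      intro v hv
      rw [pow_succ] at hv
      refine Submodule.mul_induction_on hv ?_ ?_
      · rintro u hu _ ⟨w, hw, rfl⟩
        obtain ⟨z, hz, rfl⟩ := ih u hu
        refine ⟨z * w, ?_, ?_⟩
        · rw [pow_succ]; exact Ideal.mul_mem_mul hz hw
        · rw [hψ, map_mul]; ring
      · rintro u v ⟨y, hy, rfl⟩ ⟨z, hz, rfl⟩
        exact ⟨y + z, add_mem hy hz, by rw [map_add]; ring⟩
  refine ⟨n, c, hcI, le_antisymm ?_ ?_⟩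
  · intro y hy
    obtain ⟨z, hz, e⟩ := dn n _ (hn' (up (n + 1) y hy))
    have hcc : ι c ^ n * ci ^ n = 1 := by rw [← mul_pow, hci, one_pow]
    have : y = c * z := hιinj (by
      rw [map_mul]
      linear_combination ι c ^ (n + 1) * e + ι c * ι z * hcc - ι y * ι c * ci * hcc - ι y * hci)
    rw [this]
    exact Ideal.mul_mem_mul (Ideal.mem_span_singleton_self c) hz
  · rw [pow_succ']
    exact Ideal.mul_mono_left ((Ideal.span_singleton_le_iff_mem _).mpr hcI)

theorem arf_weak {A Q O : Type*} [CommRing A] [CommRing Q]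
    [Algebra A Q] [IsFractionRing A Q] [CommRing O] [Algebra A O] [Algebra O Q]
    [IsScalarTower A O Q] [IsIntegralClosure O A Q]
    (hsc : ∀ x : O, x ⊗ₜ[A] (1 : O) = (1 : O) ⊗ₜ[A] x → ∃ a : A, algebraMap A O a = x)
    (x y z : A) (hx : x ∈ nonZeroDivisors A) (s t : Q) (hs : IsIntegral A s) (ht : IsIntegral A t)
    (es : algebraMap A Q x * s = algebraMap A Q y) (et : algebraMap A Q x * t = algebraMap A Q z) :
    y * z ∈ Ideal.span {x} := by
  have hinjO : Function.Injective (algebraMap O Q) := IsIntegralClosure.algebraMap_injective O A Q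
  have hex : ∀ x : Q, IsIntegral A x → ∃ y : O, algebraMap O Q y = x := fun x hx =>
    ⟨IsIntegralClosure.mk' O x hx, IsIntegralClosure.algebraMap_mk' O x hx⟩
  have hAO : ∀ x : A, algebraMap O Q (algebraMap A O x) = algebraMap A Q x := fun x =>
    (IsScalarTower.algebraMap_apply A O Q x).symm
  obtain ⟨s, rfl⟩ := hex s hs
  obtain ⟨t, rfl⟩ := hex t ht
  have e1 : x • s = algebraMap A O y := hinjO (by
    rw [Algebra.smul_def, map_mul, hAO, es, hAO])
  have e2 : x • t = algebraMap A O z := hinjO (by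
    rw [Algebra.smul_def, map_mul, hAO, et, hAO])
  obtain ⟨a, ha⟩ := hsc (x • (s * t)) (by
    have h1 : x • (s * t) = y • t := by rw [← smul_mul_assoc, e1, Algebra.smul_def]
    have h2 : x • (s * t) = z • s := by rw [← mul_smul_comm, e2, mul_comm, Algebra.smul_def]
    calc (x • (s * t)) ⊗ₜ[A] (1 : O) = (z • s) ⊗ₜ[A] (1 : O) := by rw [h2]
      _ = s ⊗ₜ[A] (x • t) := by rw [TensorProduct.smul_tmul, e2, Algebra.algebraMap_eq_smul_one]
      _ = (x • s) ⊗ₜ[A] t := by rw [TensorProduct.smul_tmul]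
      _ = (1 : O) ⊗ₜ[A] (y • t) := by rw [e1, Algebra.algebraMap_eq_smul_one, TensorProduct.smul_tmul]
      _ = _ := by rw [h1])
  refine Ideal.mem_span_singleton'.mpr ⟨a, IsFractionRing.injective A Q ?_⟩
  have := congrArg (algebraMap O Q) ha
  rw [hAO, Algebra.smul_def, map_mul, map_mul, hAO] at this
  rw [map_mul, map_mul, this, ← es, ← et]
  ring

theorem arf_dir1 (A : Type*) [CommRing A] [IsNoetherianRing A]
    (hsemi : {M : Ideal A | M.IsMaximal}.Finite)
    (hart : ∀ s ∈ nonZeroDivisors A, IsArtinianRing (A ⧸ Ideal.span {s}))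
    (h : IsStrictlyClosed A) : IsArfRing A := by
  have hsc : ∀ x : integralClosure A (FractionRing A),
      x ⊗ₜ[A] (1 : integralClosure A (FractionRing A)) =
        (1 : integralClosure A (FractionRing A)) ⊗ₜ[A] x →
      ∃ a : A, algebraMap A (integralClosure A (FractionRing A)) a = x := by
    intro x hx
    obtain ⟨a, ha⟩ := h x.1 ⟨x.2, hx⟩
    exact ⟨a, Subtype.ext ha⟩
  refine ⟨fun I hI hx => ?_, fun x y z hx hy hz => ?_⟩
  · obtain ⟨x, hxI, hx⟩ := hx
    refine arf_reduction (Q := FractionRing A) hsemi hart hsc I (fun a ha => ?_) x hxI hx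
    have : a ∈ (I : Set A) := hI ▸ ha
    exact this
  · exact arf_weak hsc x y z hx _ _ hy hz (IsLocalization.mk'_spec' _ y ⟨x, hx⟩)
      (IsLocalization.mk'_spec' _ z ⟨x, hx⟩)

/-- integrality over a submodule of an algebra -/
def arfIntOver {A Q : Type*} [CommRing A] [CommRing Q] [Algebra A Q] (I : Submodule A Q)
    (a : Q) : Prop :=
  ∃ n : ℕ, 0 < n ∧ ∃ c : ℕ → Q, (∀ i ∈ Finset.Icc 1 n, c i ∈ I ^ i) ∧
    a ^ n + ∑ i ∈ Finset.Icc 1 n, c i * a ^ (n - i) = 0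

/-- the inductive invariant: the Arf conditions for an intermediate ring -/
structure ArfInv {A Q : Type*} [CommRing A] [CommRing Q] [Algebra A Q]
    (B : Subalgebra A Q) : Prop where
  le : ∀ x ∈ B, IsIntegral A x
  red : ∀ I : Submodule A Q, (∀ y ∈ I, y ∈ B) → (∀ b ∈ B, ∀ y ∈ I, b * y ∈ I) →
    (∃ u ∈ I, IsUnit u) → (∀ a ∈ B, arfIntOver I a → a ∈ I) →
    ∃ d ∈ I, IsUnit d ∧ ∀ y ∈ I, ∃ t, IsIntegral A t ∧ y = d * t
  weak : ∀ x y z, x ∈ B → IsUnit x → IsIntegral A y → IsIntegral A z → x * y ∈ B → x * z ∈ B →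
    x * y * z ∈ B

theorem arf_pow_integral {A Q : Type*} [CommRing A] [CommRing Q] [Algebra A Q]
    (I : Submodule A Q) (hI : ∀ y ∈ I, IsIntegral A y) (k : ℕ) : ∀ y ∈ I ^ k, IsIntegral A y := by
  induction k with
  | zero =>
    intro y hy
    rw [pow_zero] at hy
    obtain ⟨z, rfl⟩ := Submodule.mem_one.mp hy
    exact isIntegral_algebraMap
  | succ k ih =>
    intro y hy
    rw [pow_succ] at hy
    refine Submodule.mul_induction_on hy (fun u hu v hv => (ih u hu).mul (hI v hv))
      (fun u v hu hv => hu.add hv)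

theorem arf_intOver_integral {A Q : Type*} [CommRing A] [CommRing Q] [Algebra A Q]
    (I : Submodule A Q) (hI : ∀ y ∈ I, IsIntegral A y) (a : Q) (ha : arfIntOver I a) :
    IsIntegral A a := by
  obtain ⟨n, hn, c, hc, e⟩ := ha
  have h1 : IsIntegral (integralClosure A Q) a := by
    have hex : ∃ c' : ℕ → integralClosure A Q, ∀ i ∈ Finset.Icc 1 n, ((c' i : integralClosure A Q) : Q) = c i := by
      classical
      refine ⟨fun i => if h : i ∈ Finset.Icc 1 n then
        ⟨c i, arf_pow_integral I hI i _ (hc i h)⟩ else 0, fun i hi => by simp only [hi, dif_pos]⟩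
    obtain ⟨c', hc'⟩ := hex
    refine ⟨Polynomial.X ^ n + ∑ i ∈ Finset.Icc 1 n,
      Polynomial.C (c' i) * Polynomial.X ^ (n - i), ?_, ?_⟩
    · apply Polynomial.monic_X_pow_add
      refine lt_of_le_of_lt (Polynomial.degree_sum_le _ _) ?_
      rw [Finset.sup_lt_iff (by exact WithBot.bot_lt_coe n)]
      intro i hi
      rw [Finset.mem_Icc] at hi
      refine lt_of_le_of_lt (Polynomial.degree_C_mul_X_pow_le _ _) ?_
      exact_mod_cast (by omega : n - i < n)
    · rw [← e, Polynomial.eval₂_add, Polynomial.eval₂_X_pow, Polynomial.eval₂_finsetSum]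
      congr 1
      refine Finset.sum_congr rfl fun i hi => ?_
      rw [Polynomial.eval₂_mul, Polynomial.eval₂_C, Polynomial.eval₂_X_pow, ← hc' i hi]
      rfl
  exact isIntegral_trans (A := integralClosure A Q) a h1

theorem arf_intOver_scale {A Q : Type*} [CommRing A] [CommRing Q] [Algebra A Q]
    (I : Submodule A Q) (c ci : Q) (hci : c * ci = 1) (a : Q)
    (ha : arfIntOver (Submodule.map (LinearMap.mulLeft A c) I) a) : arfIntOver I (ci * a) := by
  obtain ⟨n, hn, f, hf, e⟩ := ha
  refine ⟨n, hn, fun i => ci ^ i * f i, ?_, ?_⟩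
  · intro i hi
    have h := hf i hi
    have hm : Submodule.map (LinearMap.mulLeft A c) I = Submodule.span A {c} * I := by
      ext z
      rw [Submodule.mem_span_singleton_mul]
      rfl
    rw [hm, mul_pow, Submodule.span_pow, Set.singleton_pow, Submodule.mem_span_singleton_mul] at h
    obtain ⟨z, hz, h⟩ := h
    change ci ^ i * f i ∈ _
    rw [← h, ← mul_assoc, ← mul_pow, mul_comm ci, hci, one_pow, one_mul]
    exact hz
  · have h2 : ∑ i ∈ Finset.Icc 1 n, ci ^ i * f i * (ci * a) ^ (n - i) =
        ci ^ n * ∑ i ∈ Finset.Icc 1 n, f i * a ^ (n - i) := by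
      rw [Finset.mul_sum]
      refine Finset.sum_congr rfl fun i hi => ?_
      rw [Finset.mem_Icc] at hi
      rw [mul_pow]
      have : ci ^ n = ci ^ i * ci ^ (n - i) := by rw [← pow_add]; congr 1; omega
      rw [this]; ring
    rw [h2, mul_pow]
    linear_combination ci ^ n * e

theorem arf_inv_bot {A : Type*} [CommRing A] [IsNoetherianRing A] (h : IsArfRing A) :
    ArfInv (⊥ : Subalgebra A (FractionRing A)) := by
  let Q := FractionRing A
  let ι := algebraMap A Q
  have hιinj : Function.Injective ι := IsFractionRing.injective A Q
  refine ⟨?_, ?_, ?_⟩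
  · intro x hx
    obtain ⟨a, rfl⟩ := Algebra.mem_bot.mp hx
    exact isIntegral_algebraMap
  · intro I hIB _ hu hic
    let I0 : Ideal A := Submodule.comap (Algebra.linearMap A Q) I
    have hI0 : ∀ x, x ∈ I0 ↔ ι x ∈ I := fun x => Iff.rfl
    have hpow : ∀ k, ∀ x ∈ I0 ^ k, ι x ∈ I ^ k := by
      intro k
      induction k with
      | zero => intro x _; rw [pow_zero]; exact Submodule.mem_one.mpr ⟨x, rfl⟩
      | succ k ih =>
        intro x hx
        rw [pow_succ] at hx
        refine Submodule.mul_induction_on hx ?_ ?_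
        · intro u hu v hv
          rw [map_mul, pow_succ]
          exact Submodule.mul_mem_mul (ih u hu) hv
        · intro u v hu hv
          rw [map_add]; exact add_mem hu hv
    have hclosed : Ideal.IsIntegrallyClosedIdeal I0 := by
      apply Set.Subset.antisymm
      · rintro a ⟨n, hn, c, hc, e⟩
        refine hic (ι a) (Algebra.mem_bot.mpr ⟨a, rfl⟩) ⟨n, hn, fun i => ι (c i), ?_, ?_⟩
        · intro i hi; exact hpow i _ (hc i hi)
        · have := congrArg ι e
          simpa [map_sum] using this
      · intro a ha
        refine ⟨1, one_pos, fun _ => -a, ?_, by simp⟩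
        intro i hi
        have : i = 1 := by simp at hi; omega
        rw [this, pow_one]
        exact neg_mem ha
    obtain ⟨u, huI, hu⟩ := hu
    obtain ⟨x, rfl⟩ := Algebra.mem_bot.mp (hIB u huI)
    obtain ⟨n, d, hd, e⟩ := h.1 I0 hclosed ⟨x, huI, arf_isUnit_regular Q x hu⟩
    have hdu : IsUnit (ι d) := by
      have h1 : x ^ (n + 1) ∈ I0 ^ (n + 1) := Ideal.pow_mem_pow huI _
      rw [e] at h1
      obtain ⟨z, _, hz⟩ := Ideal.mem_span_singleton_mul.mp h1
      have : IsUnit (ι d * ι z) := by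
        rw [← map_mul, hz, map_pow]; exact IsUnit.pow _ hu
      exact isUnit_of_mul_isUnit_left this
    obtain ⟨di, hdi⟩ := hdu.exists_right_inv
    refine ⟨ι d, hd, hdu, ?_⟩
    intro y hy
    obtain ⟨y, rfl⟩ := Algebra.mem_bot.mp (hIB y hy)
    refine ⟨di * ι y, ?_, ?_⟩
    · refine arf_integral (Submodule.map (Algebra.linearMap A Q) (I0 ^ n))
        (Submodule.FG.map _ (IsNoetherian.noetherian _)) (ι (x ^ n))
        (by rw [map_pow]; exact IsUnit.pow _ hu) ⟨x ^ n, Ideal.pow_mem_pow huI _, rfl⟩ _ ?_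
      rintro _ ⟨z, hz, rfl⟩
      have h1 : y * z ∈ I0 ^ (n + 1) := by rw [pow_succ']; exact Ideal.mul_mem_mul hy hz
      rw [e] at h1
      obtain ⟨w, hw, hw2⟩ := Ideal.mem_span_singleton_mul.mp h1
      refine ⟨w, hw, ?_⟩
      change ι w = di * ι y * ι z
      have h3 : ι d * ι w = ι y * ι z := by rw [← map_mul, ← map_mul, hw2]
      linear_combination di * h3 - ι w * hdi
    · change ι y = _
      linear_combination -(ι y) * hdi
  · intro x y z hx hxu hy hz hxy hxz
    obtain ⟨x, rfl⟩ := Algebra.mem_bot.mp hx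
    obtain ⟨y0, hy0⟩ := Algebra.mem_bot.mp hxy
    obtain ⟨z0, hz0⟩ := Algebra.mem_bot.mp hxz
    have hxr := arf_isUnit_regular Q x hxu
    have e1 : y = IsLocalization.mk' Q y0 (⟨x, hxr⟩ : nonZeroDivisors A) :=
      IsLocalization.eq_mk'_iff_mul_eq.mpr (by rw [hy0, mul_comm])
    have e2 : z = IsLocalization.mk' Q z0 (⟨x, hxr⟩ : nonZeroDivisors A) :=
      IsLocalization.eq_mk'_iff_mul_eq.mpr (by rw [hz0, mul_comm])
    rw [e1] at hy
    rw [e2] at hz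
    obtain ⟨w, hw⟩ := Ideal.mem_span_singleton'.mp (h.2 x y0 z0 hxr hy hz)
    refine Algebra.mem_bot.mpr ⟨w, ?_⟩
    refine hxu.mul_left_injective ?_
    change ι w * ι x = ι x * y * z * ι x
    rw [← map_mul, hw, map_mul]
    change ι y0 = ι x * y at hy0
    change ι z0 = ι x * z at hz0
    rw [hy0, hz0]; ring

theorem arf_step {A Q : Type*} [CommRing A] [CommRing Q] [Algebra A Q]
    (B : Subalgebra A Q) (hB : ArfInv B) (M : Submodule A Q) (hMB : ∀ y ∈ M, y ∈ B)
    (hMs : ∀ b ∈ B, ∀ y ∈ M, b * y ∈ M) (h1 : (1 : Q) ∉ M)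
    (hmax : ∀ a ∈ B, a ∉ M → ∃ r ∈ B, ∃ m ∈ M, r * a + m = 1) (hu : ∃ u ∈ M, IsUnit u) :
    ∃ c ∈ M, IsUnit c ∧ (∀ y ∈ M, ∃ t, IsIntegral A t ∧ y = c * t) ∧
      (∀ t, IsIntegral A t → c * t ∈ B → c * t ∈ M) ∧
      ∃ B1 : Subalgebra A Q, ArfInv B1 ∧ ∀ q, q ∈ B1 ↔ c * q ∈ M := by
  have hprime : ∀ a ∈ B, a ∉ M → ∀ n, a ^ n ∉ M := by
    intro a ha haM n
    induction n with
    | zero => rwa [pow_zero]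
    | succ n ih =>
      intro h
      obtain ⟨r, hr, m, hm, e⟩ := hmax a ha haM
      apply ih
      have : a ^ n = r * a ^ (n + 1) + a ^ n * m := by linear_combination -(a ^ n) * e
      rw [this]
      exact add_mem (hMs _ hr _ h) (hMs _ (pow_mem ha n) _ hm)
  have hMpow : ∀ k, 1 ≤ k → M ^ k ≤ M := by
    intro k hk
    induction k, hk using Nat.le_induction with
    | base => rw [pow_one]
    | succ k hk ih =>
      rw [pow_succ, Submodule.mul_le]
      intro y hy z hz
      exact hMs _ (hMB _ (ih hy)) _ hz
  obtain ⟨c, hcM, hcu, hct⟩ := hB.red M hMB hMs hu (by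
    rintro a ha ⟨n, hn, f, hf, e⟩
    by_contra haM
    refine hprime a ha haM n ?_
    rw [eq_neg_of_add_eq_zero_left e]
    refine neg_mem (sum_mem fun i hi => ?_)
    rw [mul_comm]
    exact hMs _ (pow_mem ha _) _ (hMpow i (Finset.mem_Icc.mp hi).1 (hf i hi)))
  have hcB := hMB c hcM
  have hno : ∀ s, IsIntegral A s → c * s ≠ 1 := by
    rintro s ⟨p, hp, hp0⟩ hcs
    apply h1
    rw [Polynomial.eval₂_eq_sum_range, Finset.sum_range_succ, hp.coeff_natDegree, map_one,
      one_mul] at hp0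
    have e1 : ∀ k ≤ p.natDegree, c ^ p.natDegree * s ^ k = c ^ (p.natDegree - k) := by
      intro k hk
      have : c ^ p.natDegree = c ^ (p.natDegree - k) * c ^ k := by
        rw [← pow_add]; congr 1; omega
      rw [this, mul_assoc, ← mul_pow, hcs, one_pow, mul_one]
    have e2 : (1 : Q) = - ∑ k ∈ Finset.range p.natDegree,
        algebraMap A Q (p.coeff k) * c ^ (p.natDegree - k) := by
      have h3 := congrArg (fun z => c ^ p.natDegree * z) hp0
      simp only [mul_add, mul_zero, e1 _ le_rfl, Nat.sub_self, pow_zero, Finset.mul_sum] at h3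
      rw [eq_neg_of_add_eq_zero_right h3]
      congr 1
      refine Finset.sum_congr rfl fun k hk => ?_
      rw [← e1 k (Finset.mem_range.mp hk).le]
      ring
    rw [e2]
    refine neg_mem (sum_mem fun k hk => ?_)
    obtain ⟨j, hj⟩ : ∃ j, p.natDegree - k = j + 1 := ⟨p.natDegree - k - 1, by
      have := Finset.mem_range.mp hk; omega⟩
    rw [hj, pow_succ, ← mul_assoc]
    exact hMs _ (mul_mem (B.algebraMap_mem _) (pow_mem hcB j)) _ hcM
  have hcO : ∀ t, IsIntegral A t → c * t ∈ B → c * t ∈ M := by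
    intro t ht hctB
    by_contra hn
    obtain ⟨r, hr, m, hm, e⟩ := hmax _ hctB hn
    obtain ⟨t', ht', rfl⟩ := hct m hm
    exact hno (r * t + t') (((hB.le r hr).mul ht).add ht') (by linear_combination e)
  obtain ⟨ci, hci⟩ := hcu.exists_right_inv
  have hint : ∀ q, c * q ∈ M → IsIntegral A q := by
    intro q hq
    obtain ⟨t, ht, e⟩ := hct _ hq
    rwa [hcu.mul_right_injective e]
  let B1 : Subalgebra A Q :=
    { carrier := {q | c * q ∈ M}
      mul_mem' := by
        intro a b ha hb
        change c * (a * b) ∈ M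
        have h3 := hB.weak c a b hcB hcu (hint a ha) (hint b hb) (hMB _ ha) (hMB _ hb)
        rw [mul_assoc] at h3
        exact hcO _ ((hint a ha).mul (hint b hb)) h3
      add_mem' := by
        intro a b ha hb
        change c * (a + b) ∈ M
        rw [mul_add]; exact add_mem ha hb
      algebraMap_mem' := by
        intro r
        change c * algebraMap A Q r ∈ M
        rw [mul_comm]; exact hMs _ (B.algebraMap_mem r) _ hcM }
  have hB1 : ∀ q, q ∈ B1 ↔ c * q ∈ M := fun q => Iff.rfl
  have hBB1 : ∀ b ∈ B, b ∈ B1 := fun b hb => by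
    rw [hB1, mul_comm]; exact hMs _ hb _ hcM
  refine ⟨c, hcM, hcu, hct, hcO, B1, ⟨fun x hx => hint x hx, ?_, ?_⟩, hB1⟩
  · intro I1 hI1 hs hu1 hic
    have hI : ∀ y ∈ Submodule.map (LinearMap.mulLeft A c) I1, y ∈ M := by
      rintro _ ⟨y, hy, rfl⟩; exact hI1 y hy
    obtain ⟨d, hd, hdu, hdt⟩ := hB.red (Submodule.map (LinearMap.mulLeft A c) I1)
      (fun y hy => hMB _ (hI y hy)) (by
        rintro b hb _ ⟨y, hy, rfl⟩
        exact ⟨b * y, hs b (hBB1 b hb) y hy, by simp only [LinearMap.mulLeft_apply]; ring⟩)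
      (by
        obtain ⟨u, hu, huu⟩ := hu1
        exact ⟨c * u, ⟨u, hu, rfl⟩, hcu.mul huu⟩)
      (by
        intro a ha hai
        have h2 := arf_intOver_scale I1 c ci hci a hai
        have h3 := arf_intOver_integral I1 (fun y hy => hint y (hI1 y hy)) _ h2
        have e : c * (ci * a) = a := by rw [← mul_assoc, hci, one_mul]
        have h4 := hcO _ h3 (by rwa [e])
        exact ⟨ci * a, hic _ h4 h2, e⟩)
    obtain ⟨d1, hd1, rfl⟩ := hd
    simp only [LinearMap.mulLeft_apply] at hdu hdt
    refine ⟨d1, hd1, isUnit_of_mul_isUnit_right hdu, fun y hy => ?_⟩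
    obtain ⟨t, ht, e⟩ := hdt (c * y) ⟨y, hy, rfl⟩
    exact ⟨t, ht, hcu.mul_right_injective (by simpa [mul_assoc] using e)⟩
  · intro x y z hx hxu hy hz hxy hxz
    rw [hB1] at hx hxy hxz ⊢
    have h3 := hB.weak (c * x) y z (hMB _ hx) (hcu.mul hxu) hy hz
      (by rw [mul_assoc]; exact hMB _ hxy) (by rw [mul_assoc]; exact hMB _ hxz)
    rw [mul_assoc c, mul_assoc c] at h3
    exact hcO _ (((hint x hx).mul hy).mul hz) h3

/-- explicit form of the vanishing of x ⊗ 1 - 1 ⊗ x -/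
def ArfS {A Q : Type*} [CommRing A] [CommRing Q] [Algebra A Q]
    (B : Subalgebra A Q) (T : Submodule A Q) (x : Q) : Prop :=
  ∃ (J L : Type) (_ : Fintype J) (_ : Fintype L) (w p q : J → Q) (g : L → Q) (C : L → J → Q),
    (∀ j, w j ∈ T) ∧ (∀ j, p j ∈ B) ∧ (∀ j, q j ∈ B) ∧ (∀ l, g l ∈ T) ∧ (∀ l j, C l j ∈ B) ∧
    ∑ j, p j * w j = x ∧ ∑ j, q j * w j = 1 ∧ (∀ l, ∑ j, C l j * w j = 0) ∧
    ∀ j, p j - x * q j + ∑ l, C l j * g l = 0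

theorem arf_S_of_tensor {A Q O : Type*} [CommRing A] [CommRing Q] [Algebra A Q] [CommRing O]
    [Algebra A O] (φ : O →ₐ[A] Q) (x : O) (h : x ⊗ₜ[A] (1 : O) = (1 : O) ⊗ₜ[A] x) :
    ∃ T : Submodule A Q, T.FG ∧ (∀ y ∈ T, ∃ z, φ z = y) ∧ 1 ∈ T ∧ φ x ∈ T ∧
      ArfS (⊥ : Subalgebra A Q) T (φ x) := by
  classical
  let P : Submodule A O := Submodule.span A {x, 1}
  have hP : P.FG := Submodule.fg_span (Set.toFinite _)
  let xP : P := ⟨x, Submodule.subset_span (by simp)⟩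
  let oP : P := ⟨1, Submodule.subset_span (by simp)⟩
  obtain ⟨N, hPN, hN, e⟩ := TensorProduct.eq_of_fg_of_subtype_eq (N := O) hP
    (t := xP ⊗ₜ[A] (1 : O)) (t' := oP ⊗ₜ[A] x) (by simpa [xP, oP] using h)
  simp only [LinearMap.rTensor_tmul] at e
  have hNf : Module.Finite A N := Module.Finite.iff_fg.mpr hN
  obtain ⟨n, w, hw⟩ := Module.Finite.exists_fin (R := A) (M := N)
  obtain ⟨p, hp⟩ := (Submodule.mem_span_range_iff_exists_fun A).mp
    (show Submodule.inclusion hPN xP ∈ Submodule.span A (Set.range w) by rw [hw]; trivial)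
  obtain ⟨q, hq⟩ := (Submodule.mem_span_range_iff_exists_fun A).mp
    (show Submodule.inclusion hPN oP ∈ Submodule.span A (Set.range w) by rw [hw]; trivial)
  obtain ⟨k, a, y, hy1, hy2⟩ := TensorProduct.vanishesTrivially_of_sum_tmul_eq_zero A
    (m := w) (n := fun j => p j • (1 : O) - q j • x) hw (by
      simp only [TensorProduct.tmul_sub, TensorProduct.tmul_smul, TensorProduct.smul_tmul']
      refine (Finset.sum_sub_distrib (fun j => (p j • w j) ⊗ₜ[A] (1 : O)) (fun j => (q j • w j) ⊗ₜ[A] x)).trans ?_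
      rw [← TensorProduct.sum_tmul, ← TensorProduct.sum_tmul, hp, hq, e]
      exact sub_self _)
  have hp' : ∑ j, p j • (w j : O) = x := by
    have := congrArg N.subtype hp
    simpa [xP] using this
  have hq' : ∑ j, q j • (w j : O) = 1 := by
    have := congrArg N.subtype hq
    simpa [oP] using this
  have hy2' : ∀ l, ∑ j, a j l • (w j : O) = 0 := by
    intro l
    have := congrArg N.subtype (hy2 l)
    simpa using this
  let S : Set O := {x, 1} ∪ (Set.range (fun j => (w j : O)) ∪ Set.range y)
  have hS : S.Finite := Set.toFinite _
  refine ⟨Submodule.map φ.toLinearMap (Submodule.span A S), (Submodule.fg_span hS).map _, ?_,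
    ⟨1, Submodule.subset_span (by simp [S]), by simp⟩,
    ⟨x, Submodule.subset_span (by simp [S]), by simp⟩,
    Fin n, Fin k, inferInstance, inferInstance, fun j => φ (w j), fun j => algebraMap A Q (p j),
    fun j => algebraMap A Q (q j), fun l => - φ (y l), fun l j => algebraMap A Q (a j l),
    ?_, ?_, ?_, ?_, ?_, ?_, ?_, ?_, ?_⟩
  · rintro _ ⟨z, _, rfl⟩; exact ⟨z, rfl⟩
  · intro j; exact ⟨w j, Submodule.subset_span (by simp [S]), rfl⟩
  · intro j; exact Subalgebra.algebraMap_mem _ _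
  · intro j; exact Subalgebra.algebraMap_mem _ _
  · intro l; exact neg_mem ⟨y l, Submodule.subset_span (by simp [S]), rfl⟩
  · intro l j; exact Subalgebra.algebraMap_mem _ _
  · conv_rhs => rw [← hp', map_sum]
    simp [Algebra.smul_def]
  · have := congrArg φ hq'
    simpa [Algebra.smul_def] using this
  · intro l
    have := congrArg φ (hy2' l)
    simpa [Algebra.smul_def] using this
  · intro j
    have := congrArg φ (hy1 j)
    simp only [map_sub, map_sum, Algebra.smul_def, mul_one, map_mul, AlgHom.commutes] at this
    simp only [mul_neg, Finset.sum_neg_distrib, ← this]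
    ring

theorem arf_lin_field {k V J L : Type*} [Field k] [AddCommGroup V] [Module k V] [Fintype J]
    [Fintype L] (w : J → V) (g : L → V) (p q : J → k) (C : L → J → k) (o x : V)
    (hp : ∑ j, p j • w j = x) (hq : ∑ j, q j • w j = o) (hC : ∀ l, ∑ j, C l j • w j = 0)
    (hj : ∀ j, p j • o - q j • x + ∑ l, C l j • g l = 0) (ho : o ≠ 0) : ∃ a : k, x = a • o := by
  obtain ⟨f, hf⟩ : ∃ f : Module.Dual k V, f o ≠ 0 := by
    by_contra! h
    exact ho ((Module.forall_dual_apply_eq_zero_iff k o).mp h)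
  have h1 : ∑ j, f (w j) • (p j • o - q j • x + ∑ l, C l j • g l) = 0 :=
    Finset.sum_eq_zero fun j _ => by rw [hj, smul_zero]
  have h2 : f x • o - f o • x = 0 := by
    rw [← h1]
    simp only [smul_add, smul_sub, Finset.sum_add_distrib, Finset.sum_sub_distrib, smul_smul,
      Finset.smul_sum]
    rw [Finset.sum_comm]
    simp only [← Finset.sum_smul]
    have e1 : ∑ j, f (w j) * p j = f x := by
      rw [← hp, map_sum]; simp [mul_comm]
    have e2 : ∑ j, f (w j) * q j = f o := by
      rw [← hq, map_sum]; simp [mul_comm]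
    have e3 : ∀ l, ∑ j, f (w j) * C l j = 0 := by
      intro l
      have := congrArg f (hC l)
      rw [map_sum] at this; simpa [mul_comm] using this
    simp [e1, e2, e3]
  refine ⟨(f o)⁻¹ * f x, ?_⟩
  rw [mul_smul, sub_eq_zero.mp h2, smul_smul, inv_mul_cancel₀ hf, one_smul]

theorem arf_lin1 {R Q J L : Type*} [CommRing R] [AddCommGroup Q] [Module R Q] [Fintype J]
    [Fintype L] (I : Ideal R) [hI : I.IsMaximal] (N : Submodule R Q)
    (w : J → Q) (g : L → Q) (p q : J → R) (C : L → J → R) (o x : Q)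
    (hw : ∀ j, w j ∈ N) (hg : ∀ l, g l ∈ N) (ho' : o ∈ N) (hx : x ∈ N)
    (hp : ∑ j, p j • w j = x) (hq : ∑ j, q j • w j = o) (hC : ∀ l, ∑ j, C l j • w j = 0)
    (hj : ∀ j, p j • o - q j • x + ∑ l, C l j • g l = 0) (ho : o ∉ I • N) :
    ∃ a : R, x - a • o ∈ I • N := by
  letI : Field (R ⧸ I) := Ideal.Quotient.field I
  let π : N →ₗ[R] (N ⧸ (I • ⊤ : Submodule R N)) := Submodule.mkQ _
  have hs : ∀ (r : R) (n : N), Ideal.Quotient.mk I r • π n = π (r • n) := fun r n => rfl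
  obtain ⟨a, ha⟩ := arf_lin_field (k := R ⧸ I) (fun j => π ⟨w j, hw j⟩) (fun l => π ⟨g l, hg l⟩)
    (fun j => Ideal.Quotient.mk I (p j)) (fun j => Ideal.Quotient.mk I (q j))
    (fun l j => Ideal.Quotient.mk I (C l j)) (π ⟨o, ho'⟩) (π ⟨x, hx⟩)
    (by
      simp only [hs, ← map_sum]; congr 1; ext; simpa using hp)
    (by
      simp only [hs, ← map_sum]; congr 1; ext; simpa using hq)
    (by
      intro l
      simp only [hs, ← map_sum]; rw [← map_zero π]; congr 1; ext; simpa using hC l)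
    (by
      intro j
      simp only [hs, ← map_sum, ← map_sub, ← map_add]; rw [← map_zero π]; congr 1; ext
      simpa using hj j)
    (by
      intro h
      apply ho
      rw [← Submodule.mem_smul_top_iff I N ⟨o, ho'⟩]
      exact (Submodule.Quotient.mk_eq_zero _).mp h)
  obtain ⟨a, rfl⟩ := Ideal.Quotient.mk_surjective a
  refine ⟨a, ?_⟩
  rw [hs, ← sub_eq_zero, ← map_sub] at ha
  exact (Submodule.mem_smul_top_iff I N _).mp ((Submodule.Quotient.mk_eq_zero _).mp ha)

theorem arf_lin2 {R Q : Type*} [CommRing R] [AddCommGroup Q] [Module R Q]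
    (I : Ideal R) [hI : I.IsMaximal] (N : Submodule R Q) (hN : N.FG) :
    ∃ (m : ℕ) (e : Fin m → Q), (∀ l, e l ∈ N) ∧
      (∀ n ∈ N, ∃ b : Fin m → R, n - ∑ l, b l • e l ∈ I • N) ∧
      ∀ b : Fin m → R, ∑ l, b l • e l ∈ I • N → ∀ l, b l ∈ I := by
  letI : Field (R ⧸ I) := Ideal.Quotient.field I
  haveI : Module.Finite R N := Module.Finite.iff_fg.mpr hN
  let π : N →ₗ[R] (N ⧸ (I • ⊤ : Submodule R N)) := Submodule.mkQ _
  have hs : ∀ (r : R) (n : N), Ideal.Quotient.mk I r • π n = π (r • n) := fun r n => rfl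
  haveI : Module.Finite (R ⧸ I) (N ⧸ (I • ⊤ : Submodule R N)) :=
    Module.Finite.of_restrictScalars_finite R _ _
  let bb := Module.finBasis (R ⧸ I) (N ⧸ (I • ⊤ : Submodule R N))
  have hsurj : ∀ v, ∃ n, π n = v := Submodule.mkQ_surjective _
  choose e he using fun l => hsurj (bb l)
  have hmem : ∀ n : N, (n : Q) ∈ I • N ↔ π n = 0 := fun n => by
    rw [← Submodule.mem_smul_top_iff I N]
    exact (Submodule.Quotient.mk_eq_zero _).symm
  refine ⟨_, fun l => (e l : Q), fun l => (e l).2, fun n hn => ?_, fun b hb l => ?_⟩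
  · choose b hb using fun l => Ideal.Quotient.mk_surjective (bb.repr (π ⟨n, hn⟩) l)
    refine ⟨b, ?_⟩
    have h1 := (hmem (⟨n, hn⟩ - ∑ l, b l • e l)).mpr (by
      rw [map_sub, map_sum]
      simp only [← hs, he, hb]
      rw [bb.sum_repr, sub_self])
    simpa using h1
  · have h1 := (hmem (∑ l, b l • e l)).mp (by simpa using hb)
    rw [map_sum] at h1
    simp only [← hs, he] at h1
    have := Fintype.linearIndependent_iff.mp bb.linearIndependent _ h1 l
    exact Ideal.Quotient.eq_zero_iff_mem.mp this

theorem arf_denom {A Q : Type*} [CommRing A] [CommRing Q] [Algebra A Q] [IsFractionRing A Q]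
    (T : Submodule A Q) (hT : T.FG) :
    ∃ s ∈ nonZeroDivisors A, ∀ t ∈ T, s • t ∈ (⊥ : Subalgebra A Q) := by
  obtain ⟨S, rfl⟩ := hT
  obtain ⟨b, hb⟩ := IsLocalization.exist_integer_multiples_of_finset (nonZeroDivisors A) S
  refine ⟨b, b.2, fun t ht => ?_⟩
  have : Submodule.span A (S : Set Q) ≤
      Submodule.comap (LinearMap.lsmul A Q (b : A)) (Subalgebra.toSubmodule ⊥) := by
    rw [Submodule.span_le]
    intro y hy
    obtain ⟨a, ha⟩ := hb y hy
    change (b : A) • y ∈ (⊥ : Subalgebra A Q)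
    rw [← ha]
    exact Subalgebra.algebraMap_mem _ _
  exact this ht

theorem arfLen_zero {A Q : Type*} [CommRing A] [AddCommGroup Q] [Module A Q]
    (X Y : Submodule A Q) (h : arfLen X Y = 0) : Y ≤ X := by
  unfold arfLen at h
  rw [Module.length_eq_zero_iff, Submodule.Quotient.subsingleton_iff] at h
  intro y hy
  have : (⟨y, hy⟩ : Y) ∈ X.submoduleOf Y := by rw [h]; trivial
  exact this

set_option maxHeartbeats 1000000 in
theorem arf_main {A Q : Type*} [CommRing A] [IsNoetherianRing A] [CommRing Q] [Algebra A Q]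
    [IsFractionRing A Q] (n : ℕ) : ∀ (B : Subalgebra A Q) (T : Submodule A Q) (x : Q),
    ArfInv B → T.FG → (∀ y ∈ T, IsIntegral A y) → 1 ∈ T → x ∈ T →
    (∀ b ∈ B, ∀ t ∈ T, b * t ∈ T) → arfLen (Subalgebra.toSubmodule B) T ≤ n → ArfS B T x →
    x ∈ B := by
  induction n with
  | zero =>
    intro B T x hB hT hTi h1T hxT hBT hlen hS
    exact arfLen_zero _ _ (by simpa using hlen) hxT
  | succ n ih =>
  intro B T x hB hT hTi h1T hxT hBT hlen hS
  by_cases hTB : T ≤ Subalgebra.toSubmodule B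
  · exact hTB hxT
  have hBleT : Subalgebra.toSubmodule B ≤ T := fun b hb => by
    have := hBT b hb 1 h1T
    rwa [mul_one] at this
  let TB : Submodule B Q :=
    { carrier := T
      add_mem' := fun ha hb => T.add_mem ha hb
      zero_mem' := T.zero_mem
      smul_mem' := fun b t ht => hBT b b.2 t ht }
  have hTBm : ∀ t, t ∈ TB ↔ t ∈ T := fun t => Iff.rfl
  have hTBfg : TB.FG := by
    obtain ⟨S, hS⟩ := hT
    refine ⟨S, le_antisymm ?_ ?_⟩
    · rw [Submodule.span_le]
      intro y hy
      change y ∈ T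
      rw [← hS]; exact Submodule.subset_span hy
    · intro t ht
      have ht' : t ∈ T := ht
      rw [← hS] at ht'
      exact Submodule.span_le_restrictScalars A B (S : Set Q) ht'
  -- conductor
  let F : Ideal B :=
    { carrier := {b | ∀ t ∈ T, (b : Q) * t ∈ B}
      add_mem' := by
        intro a b ha hb t ht
        have := add_mem (ha t ht) (hb t ht)
        simpa [add_mul] using this
      zero_mem' := by
        intro t ht
        simp
      smul_mem' := by
        intro r b hb t ht
        have := mul_mem r.2 (hb t ht)
        simpa [mul_assoc] using this }
  have hF : F ≠ ⊤ := by
    intro h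
    apply hTB
    intro t ht
    have h1 : (1 : B) ∈ F := by rw [h]; trivial
    have := h1 t ht
    simpa using this
  obtain ⟨M0, hM0, hFM⟩ := Ideal.exists_le_maximal F hF
  let M : Submodule A Q := Submodule.map B.val.toLinearMap (M0.restrictScalars A)
  have hM : ∀ y, y ∈ M ↔ ∃ h : y ∈ B, (⟨y, h⟩ : B) ∈ M0 := by
    intro y
    constructor
    · rintro ⟨z, hz, rfl⟩
      exact ⟨z.2, hz⟩
    · rintro ⟨h, hz⟩
      exact ⟨⟨y, h⟩, hz, rfl⟩
  have hMc : ∀ b : B, (b : Q) ∈ M ↔ b ∈ M0 := by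
    intro b
    rw [hM]
    exact ⟨fun ⟨_, h⟩ => h, fun h => ⟨b.2, h⟩⟩
  have hMs : ∀ b ∈ B, ∀ y ∈ M, b * y ∈ M := by
    intro b hb y hy
    obtain ⟨h, hy⟩ := (hM y).mp hy
    exact (hM _).mpr ⟨mul_mem hb h, M0.mul_mem_left ⟨b, hb⟩ hy⟩
  have hMB : ∀ y ∈ M, y ∈ B := fun y hy => ((hM y).mp hy).1
  have h1M : (1 : Q) ∉ M := by
    intro h
    apply hM0.ne_top
    rw [Ideal.eq_top_iff_one]
    exact (hMc 1).mp (by simpa using h)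
  obtain ⟨s, hs, hsT⟩ := arf_denom T hT
  obtain ⟨c, hcM, hcu, hct, hcO, B1, hB1, hB1m⟩ := arf_step B hB M hMB hMs h1M (by
      intro a ha haM
      obtain ⟨r, i, hi, e⟩ := hM0.exists_inv (x := ⟨a, ha⟩) (fun h => haM ((hM a).mpr ⟨ha, h⟩))
      exact ⟨r, r.2, i, (hMc i).mpr hi, by simpa using congrArg Subtype.val e⟩) (by
      refine ⟨algebraMap A Q s, ?_, arf_regular_isUnit Q s hs⟩
      have : algebraMap A B s ∈ M0 := hFM (by
        intro t ht
        have h3 := hsT t ht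
        rw [Algebra.smul_def] at h3
        exact (bot_le : (⊥ : Subalgebra A Q) ≤ B) h3)
      exact (hMc _).mpr this)
  obtain ⟨ci, hci⟩ := hcu.exists_right_inv
  have hcB := hMB c hcM
  let MT : Submodule A Q := (M0 • TB).restrictScalars A
  have hMTm : ∀ y, y ∈ MT ↔ y ∈ M0 • TB := fun y => Iff.rfl
  have hmul : ∀ m ∈ M, ∀ t ∈ T, m * t ∈ MT := by
    intro m hm t ht
    obtain ⟨h, hm⟩ := (hM m).mp hm
    exact Submodule.smul_mem_smul (N := TB) hm ht
  have hMTT : MT ≤ T := fun y hy => (Submodule.smul_le_right : M0 • TB ≤ TB) hy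
  have hind : ∀ (P : Q → Prop), (∀ m ∈ M, ∀ t ∈ T, P (m * t)) → (∀ y z, P y → P z → P (y + z)) →
      ∀ y ∈ MT, P y := by
    intro P h1 h2 y hy
    refine Submodule.smul_induction_on (p := P) (show y ∈ M0 • TB from hy) ?_ h2
    intro b hb t ht
    exact h1 b ((hMc b).mpr hb) t ht
  have hMTi : ∀ y ∈ MT, ∃ t, IsIntegral A t ∧ y = c * t := by
    apply hind
    · intro m hm t ht
      obtain ⟨u, hu, rfl⟩ := hct m hm
      exact ⟨u * t, hu.mul (hTi t ht), by ring⟩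
    · rintro _ _ ⟨u, hu, rfl⟩ ⟨v, hv, rfl⟩
      exact ⟨u + v, hu.add hv, by ring⟩
  have hMMT : M ≤ MT := fun m hm => by
    have := hmul m hm 1 h1T
    rwa [mul_one] at this
  have hinf : MT ⊓ Subalgebra.toSubmodule B = M := by
    apply le_antisymm
    · rintro y ⟨hy1, hy2⟩
      obtain ⟨t, ht, rfl⟩ := hMTi y hy1
      exact hcO t ht hy2
    · exact le_inf hMMT hMB
  let T1 : Submodule A Q := Submodule.comap (LinearMap.mulLeft A c) MT
  have hT1m : ∀ y, y ∈ T1 ↔ c * y ∈ MT := fun y => Iff.rfl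
  have hcinj : Function.Injective (LinearMap.mulLeft A c) := hcu.mul_right_injective
  have hcc : ∀ y, c * (ci * y) = y := fun y => by rw [← mul_assoc, hci, one_mul]
  have hT1map : Submodule.map (LinearMap.mulLeft A c) T1 = MT := by
    ext y
    constructor
    · rintro ⟨z, hz, rfl⟩; exact hz
    · intro hy
      exact ⟨ci * y, by change c * (ci * y) ∈ MT; rwa [hcc], hcc y⟩
  have hB1map : Submodule.map (LinearMap.mulLeft A c) (Subalgebra.toSubmodule B1) = M := by
    ext y
    constructor
    · rintro ⟨z, hz, rfl⟩; exact (hB1m z).mp hz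
    · intro hy
      exact ⟨ci * y, (hB1m _).mpr (by rwa [hcc]), hcc y⟩
  have hMTfg : MT.FG := by
    have : IsNoetherian A T := isNoetherian_of_fg_of_noetherian T hT
    have h2 : IsNoetherian A MT := isNoetherian_of_le hMTT
    exact isNoetherian_submodule.mp h2 MT le_rfl
  have hT1fg : T1.FG := by
    rw [← hT1map] at hMTfg
    exact Submodule.fg_of_fg_map_injective _ hcinj hMTfg
  have hT1i : ∀ y ∈ T1, IsIntegral A y := by
    intro y hy
    obtain ⟨t, ht, e⟩ := hMTi _ hy
    rwa [hcu.mul_right_injective e]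
  have hTT1 : T ≤ T1 := fun t ht => hmul c hcM t ht
  have hBB1 : ∀ b ∈ B, b ∈ B1 := fun b hb => by
    rw [hB1m, mul_comm]; exact hMs _ hb _ hcM
  have hB1T1 : ∀ b ∈ B1, ∀ t ∈ T1, b * t ∈ T1 := by
    intro b hb t ht
    rw [hT1m, mul_left_comm]
    refine hind (fun y => b * y ∈ MT) ?_ ?_ _ ht
    · intro m hm t ht
      rw [← mul_assoc]
      refine hmul _ ?_ t ht
      have h3 : b * (ci * m) ∈ B1 := mul_mem hb ((hB1m _).mpr (by rwa [hcc]))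
      rw [hB1m, mul_left_comm, hcc] at h3
      exact h3
    · intro y z hy hz
      rw [mul_add]; exact add_mem hy hz
  -- length drop
  have hlen1 : arfLen (Subalgebra.toSubmodule B1) T1 ≤ n := by
    have e1 : arfLen (Subalgebra.toSubmodule B1) T1
        = arfLen (Subalgebra.toSubmodule B) (MT ⊔ Subalgebra.toSubmodule B) := by
      rw [← arfLen_map _ hcinj, hT1map, hB1map, ← arfLen_inf, hinf]
    have e2 := arfLen_add (X := Subalgebra.toSubmodule B)
      (Y := MT ⊔ Subalgebra.toSubmodule B) (Z := T) le_sup_right (sup_le hMTT hBleT)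
    have e3 : arfLen (MT ⊔ Subalgebra.toSubmodule B) T ≠ 0 := by
      intro h
      have h1 := arfLen_zero _ _ h
      let BB : Submodule B Q :=
        { carrier := B
          add_mem' := fun ha hb => add_mem ha hb
          zero_mem' := zero_mem B
          smul_mem' := fun b t ht => mul_mem b.2 ht }
      have h2 : Submodule.map BB.mkQ TB ≤ M0 • Submodule.map BB.mkQ TB := by
        rintro _ ⟨t, ht, rfl⟩
        obtain ⟨y, hy, z, hz, rfl⟩ := Submodule.mem_sup.mp (h1 ht)
        rw [← Submodule.map_smul'']
        refine ⟨y, hy, ?_⟩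
        rw [map_add]
        have : BB.mkQ z = 0 := (Submodule.Quotient.mk_eq_zero BB).mpr hz
        rw [this, add_zero]
      obtain ⟨r, hr1, hr2⟩ := Submodule.exists_sub_one_mem_and_smul_eq_zero_of_fg_of_le_smul M0
        (Submodule.map BB.mkQ TB) (hTBfg.map _) h2
      have hrF : r ∈ F := by
        intro t ht
        have h3 := hr2 (BB.mkQ t) ⟨t, ht, rfl⟩
        rw [← map_smul] at h3
        exact (Submodule.Quotient.mk_eq_zero BB).mp h3
      apply hM0.ne_top
      rw [Ideal.eq_top_iff_one]
      have := sub_mem (hFM hrF) hr1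
      simpa using this
    rw [e1]
    rw [e2] at hlen
    have h1 : (1 : ℕ∞) ≤ arfLen (MT ⊔ Subalgebra.toSubmodule B) T :=
      Order.one_le_iff_ne_zero.mpr e3
    have h2 := (add_le_add_right h1 _).trans hlen
    push_cast at h2
    exact (ENat.add_le_add_iff_right (by simp)).mp h2
  have h1MT : (1 : Q) ∉ MT := fun h => h1M (by rw [← hinf]; exact ⟨h, one_mem B⟩)
  obtain ⟨J, L, iJ, iL, w, p, q, g, C, hw, hp, hq, hg, hC, ep, eq, eC, ej⟩ := hS
  obtain ⟨a, ha⟩ := arf_lin1 M0 TB w g (fun j => (⟨p j, hp j⟩ : B)) (fun j => (⟨q j, hq j⟩ : B))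
    (fun l j => (⟨C l j, hC l j⟩ : B)) 1 x hw hg h1T hxT
    (by simpa [Subalgebra.smul_def] using ep) (by simpa [Subalgebra.smul_def] using eq)
    (by simpa [Subalgebra.smul_def] using eC)
    (by simpa [Subalgebra.smul_def, mul_comm] using ej) h1MT
  have ha' : x - a ∈ MT := by
    have h3 : x - a • (1 : Q) ∈ MT := ha
    simpa [Subalgebra.smul_def] using h3
  obtain ⟨d, e, he, hspan, hindep⟩ := arf_lin2 M0 TB hTBfg
  choose b hb using fun j => hspan (w j) (hw j)
  have hb' : ∀ j, w j - ∑ l, (b j l : Q) * e l ∈ MT := fun j => by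
    have h3 : w j - ∑ l, b j l • e l ∈ MT := hb j
    simpa [Subalgebra.smul_def] using h3
  -- coefficient extraction
  have hcoef : ∀ f : J → Q, (∀ j, f j ∈ B) → ∑ j, f j * w j ∈ MT → ∀ l,
      ∑ j, f j * (b j l : Q) ∈ M := by
    intro f hf hfw l
    have h3 : ∑ l, (∑ j, (⟨f j, hf j⟩ : B) * b j l) • e l ∈ M0 • TB := by
      have h4 : ∑ j, f j * (w j - ∑ l, (b j l : Q) * e l) ∈ MT := by
        refine sum_mem fun j _ => ?_
        exact (M0 • TB).smul_mem ⟨f j, hf j⟩ (hb' j)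
      have h5 := sub_mem hfw h4
      rw [← Finset.sum_sub_distrib] at h5
      have h6 : ∑ l, (∑ j, (⟨f j, hf j⟩ : B) * b j l) • e l
          = ∑ j, (f j * w j - f j * (w j - ∑ l, (b j l : Q) * e l)) := by
        simp only [Subalgebra.smul_def, smul_eq_mul, AddSubmonoidClass.coe_finsetSum,
          MulMemClass.coe_mul, Finset.sum_mul]
        rw [Finset.sum_comm]
        refine Finset.sum_congr rfl fun j _ => ?_
        rw [mul_sub, sub_sub_cancel, Finset.mul_sum]
        refine Finset.sum_congr rfl fun l _ => ?_
        ring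
      rw [h6]
      exact h5
    have h4 := (hMc _).mpr (hindep _ h3 l)
    simpa using h4
  have hx1 : ci * (x - a) ∈ B1 := by
    apply ih B1 T1 _ hB1 hT1fg hT1i (hTT1 h1T) (by rw [hT1m, hcc]; exact ha') hB1T1 hlen1
    have hpp : ∀ j, p j - a * q j ∈ B := fun j => sub_mem (hp j) (mul_mem a.2 (hq j))
    have hqq : ∀ j, c * q j ∈ B := fun j => mul_mem hcB (hq j)
    have sp : ∑ j, (p j - a * q j) * w j = x - a := by
      simp only [sub_mul, Finset.sum_sub_distrib, ep, mul_assoc, ← Finset.mul_sum, eq, mul_one]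
    have sq : ∑ j, (c * q j) * w j = c := by
      simp only [mul_assoc, ← Finset.mul_sum, eq, mul_one]
    have hP := hcoef _ hpp (by rw [sp]; exact ha')
    have hQ := hcoef _ hqq (by rw [sq]; exact hMMT hcM)
    have hR := fun l => hcoef (C l) (hC l) (by rw [eC l]; exact MT.zero_mem)
    have key : ∀ f : J → Q, ∑ l, ci * (∑ j, f j * (b j l : Q)) * e l
        + ∑ j, f j * (ci * (w j - ∑ l, (b j l : Q) * e l)) = ci * ∑ j, f j * w j := by
      intro f
      have h3 : ∑ l, ci * (∑ j, f j * (b j l : Q)) * e l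
          = ∑ j, f j * (ci * ∑ l, (b j l : Q) * e l) := by
        simp only [Finset.mul_sum, Finset.sum_mul]
        rw [Finset.sum_comm]
        refine Finset.sum_congr rfl fun j _ => Finset.sum_congr rfl fun l _ => ?_
        ring
      rw [h3, ← Finset.sum_add_distrib, Finset.mul_sum]
      refine Finset.sum_congr rfl fun j _ => ?_
      ring
    refine ⟨Fin d ⊕ J, L, inferInstance, inferInstance,
      Sum.elim e (fun j => ci * (w j - ∑ l, (b j l : Q) * e l)),
      Sum.elim (fun l => ci * ∑ j, (p j - a * q j) * (b j l : Q)) (fun j => p j - a * q j),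
      Sum.elim (fun l => ci * ∑ j, (c * q j) * (b j l : Q)) (fun j => c * q j), g,
      fun k => Sum.elim (fun l => ci * ∑ j, C k j * (b j l : Q)) (C k),
      ?_, ?_, ?_, ?_, ?_, ?_, ?_, ?_, ?_⟩
    · rintro (l | j)
      · exact hTT1 (he l)
      · change _ ∈ T1
        rw [hT1m]
        simp only [Sum.elim_inr, hcc]
        exact hb' j
    · rintro (l | j)
      · rw [hB1m]; simp only [Sum.elim_inl, hcc]; exact hP l
      · exact hBB1 _ (hpp j)
    · rintro (l | j)
      · rw [hB1m]; simp only [Sum.elim_inl, hcc]; exact hQ l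
      · exact hBB1 _ (hqq j)
    · exact fun l => hTT1 (hg l)
    · rintro k (l | j)
      · rw [hB1m]; simp only [Sum.elim_inl, hcc]; exact hR k l
      · exact hBB1 _ (hC k j)
    · rw [Fintype.sum_sum_type]
      simp only [Sum.elim_inl, Sum.elim_inr]
      rw [key, sp]
    · rw [Fintype.sum_sum_type]
      simp only [Sum.elim_inl, Sum.elim_inr]
      rw [key, sq, mul_comm, hci]
    · intro k
      rw [Fintype.sum_sum_type]
      simp only [Sum.elim_inl, Sum.elim_inr]
      rw [key, eC, mul_zero]
    · have hj' : ∀ j, (p j - a * q j) - ci * (x - a) * (c * q j) + ∑ l, C l j * g l = 0 := by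
        intro j
        rw [← ej j]
        linear_combination (-(x - a) * q j) * hci
      rintro (l | j)
      · simp only [Sum.elim_inl]
        have h3 : ∑ j, ci * (b j l : Q) *
            ((p j - a * q j) - ci * (x - a) * (c * q j) + ∑ l, C l j * g l) = 0 :=
          Finset.sum_eq_zero fun j _ => by rw [hj', mul_zero]
        rw [← h3]
        simp only [mul_add, mul_sub (ci * _), Finset.sum_add_distrib, Finset.sum_sub_distrib]
        congr 1
        · congr 1
          · rw [← Finset.sum_sub_distrib, Finset.mul_sum]
            refine Finset.sum_congr rfl fun j _ => by ring
          · rw [Finset.mul_sum, Finset.mul_sum]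
            refine Finset.sum_congr rfl fun j _ => by ring
        · simp only [Finset.mul_sum, Finset.sum_mul]
          rw [Finset.sum_comm]
          refine Finset.sum_congr rfl fun j _ => Finset.sum_congr rfl fun k _ => by ring
      · exact hj' j
  rw [hB1m, hcc] at hx1
  have := add_mem (hMB _ hx1) a.2
  rwa [sub_add_cancel] at this

set_option synthInstance.maxHeartbeats 1000000 in
set_option maxHeartbeats 2000000 in
theorem arf_dir2 (A : Type*) [CommRing A] [IsNoetherianRing A]
    (hart : ∀ s ∈ nonZeroDivisors A, IsArtinianRing (A ⧸ Ideal.span {s}))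
    (h : IsArfRing A) : IsStrictlyClosed A := by
  rintro x ⟨hx, e⟩
  obtain ⟨T, hT, hTO, h1, hxT, hS⟩ := arf_S_of_tensor (integralClosure A (FractionRing A)).val
    (⟨x, hx⟩ : integralClosure A (FractionRing A)) e
  obtain ⟨s, hs, hsT⟩ := arf_denom T hT
  have := hart s hs
  have hne := arfLen_ne_top (Subalgebra.toSubmodule (⊥ : Subalgebra A (FractionRing A))) T hT s hsT
  obtain ⟨n, hn⟩ := ENat.ne_top_iff_exists.mp hne
  have hm := arf_main n ⊥ T x (arf_inv_bot h) hT (by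
      intro y hy
      obtain ⟨z, rfl⟩ := hTO y hy
      exact z.2) h1 hxT (by
      intro b hb t ht
      obtain ⟨r, rfl⟩ := Algebra.mem_bot.mp hb
      rw [← Algebra.smul_def]
      exact T.smul_mem r ht) hn.symm.le hS
  exact Algebra.mem_bot.mp hm

/-- A Noetherian semi-local ring `A` whose localizations at maximal ideals are
one-dimensional Cohen–Macaulay local rings is strictly closed in `Ā` iff it is an
Arf ring. -/
theorem strictlyClosed_iff_arf (A : Type*) [CommRing A] [IsNoetherianRing A]
    (hsemi : {M : Ideal A | M.IsMaximal}.Finite)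
    (hCM : ∀ (M : Ideal A) [M.IsMaximal],
      ringKrullDim (Localization.AtPrime M) = 1 ∧
        RingDepthGE (Localization.AtPrime M) 1) :
    IsStrictlyClosed A ↔ IsArfRing A := by
  have hart := arf_artin A (fun M _ => (hCM M).1)
  exact ⟨fun h => arf_dir1 A hsemi hart h, fun h => arf_dir2 A hart h⟩
end
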